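/- arXiv:2203.06733 — 3 statements merged into one kernel-verified Lean document; each statement's English description precedes it below -/
import Mathlib

section
/- Let f = Σ_{λ∈Λ} Σ_{‖k‖≤K} p_k(λ) D^k δ_λ be a tempered distribution on ℝ^d whose support Λ is polynomially discrete. Then there exists T < ∞ such that for every multi-index k with ‖k‖ ≤ K one has p_k(λ) = O(|λ|^T) as λ → ∞. -/
open MeasureTheory SchwartzMap Metric Set
open scoped Pointwise RealInnerProductSpace ENNReal NNReal

noncomputable section

/-- Euclidean space `ℝ^d`. -/
abbrev Rd (d : ℕ) : Type := EuclideanSpace ℝ (Fin d)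

/-- The space `S*(ℝ^d)` of tempered distributions: continuous linear functionals
on the Schwartz space `S(ℝ^d)`. -/
abbrev TemperedDist (d : ℕ) : Type := SchwartzMap (Rd d) ℂ →L[ℂ] ℂ

/-- The Fourier transform of a tempered distribution: `f̂(φ) = f(φ̂)`. -/
def fourierTD {d : ℕ} (f : TemperedDist d) : TemperedDist d :=
  f.comp (fourierTransformCLM ℂ)

/-- The support of a tempered distribution: `x ∈ supp f` iff for every open
neighbourhood `U` of `x` there is a smooth compactly supported test function
supported in `U` on which `f` does not vanish. -/
def tdSupport {d : ℕ} (f : TemperedDist d) : Set (Rd d) :=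
  {x | ∀ U : Set (Rd d), IsOpen U → x ∈ U →
    ∃ φ : SchwartzMap (Rd d) ℂ, HasCompactSupport (⇑φ) ∧ tsupport (⇑φ) ⊆ U ∧ f φ ≠ 0}

/-- A set is locally finite if its intersection with every ball is finite. -/
def LocFinite {d : ℕ} (A : Set (Rd d)) : Prop :=
  ∀ (x : Rd d) (r : ℝ), (A ∩ Metric.ball x r).Finite

/-- A set is uniformly discrete if distances between distinct points are
bounded below by a positive constant. -/
def UniformlyDiscrete {d : ℕ} (A : Set (Rd d)) : Prop :=
  ∃ η > (0:ℝ), ∀ x ∈ A, ∀ y ∈ A, x ≠ y → η ≤ dist x y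

/-- A set is polynomially discrete (p-discrete) if
`|x - x'| ≥ c min{1, |x|^{-h}}` for distinct points `x, x'` of the set. -/
def PDiscrete {d : ℕ} (A : Set (Rd d)) : Prop :=
  ∃ c > (0:ℝ), ∃ h > (0:ℝ), ∀ x ∈ A, ∀ y ∈ A, x ≠ y →
    c * (if ‖x‖ ≤ 1 then 1 else ‖x‖ ^ (-h)) ≤ dist x y

/-- A set has bounded density if it is locally finite and the number of its
points in balls of radius 1 is uniformly bounded. -/
def BoundedDensity {d : ℕ} (A : Set (Rd d)) : Prop :=
  LocFinite A ∧ ∃ N : ℕ, ∀ x : Rd d, (A ∩ Metric.ball x 1).ncard ≤ N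

/-- A set is relatively dense if it intersects every ball of some fixed radius `R`. -/
def RelDense {d : ℕ} (A : Set (Rd d)) : Prop :=
  ∃ R : ℝ, 0 < R ∧ ∀ x : Rd d, ∃ a ∈ A, dist x a ≤ R

/-- A full-rank lattice in `ℝ^d` is the image of `ℤ^d` under an invertible
linear operator. -/
def IsFullRankLattice {d : ℕ} (L : Set (Rd d)) : Prop :=
  ∃ T : Rd d →ₗ[ℝ] Rd d, Function.Bijective T ∧
    L = T '' {x : Rd d | ∀ i, ∃ n : ℤ, x i = (n : ℝ)}

/-- The multi-indices `k ∈ (ℕ ∪ {0})^d` with `‖k‖ = k₁ + ⋯ + k_d ≤ K`. -/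
def mIdx (d K : ℕ) : Finset (Fin d → ℕ) :=
  (Finset.Iic fun _ => K).filter fun k => (∑ i, k i) ≤ K

/-- Partial derivative in the `i`-th coordinate direction. -/
def pderiv' {d : ℕ} (i : Fin d) (φ : Rd d → ℂ) : Rd d → ℂ :=
  fun x => fderiv ℝ φ x (EuclideanSpace.single i (1:ℝ))

/-- The mixed partial derivative `D^k = ∂^{k₁}_{x₁} ⋯ ∂^{k_d}_{x_d}`. -/
def Dmulti {d : ℕ} (k : Fin d → ℕ) : (Rd d → ℂ) → (Rd d → ℂ) :=
  ((List.finRange d).map fun i => (pderiv' i)^[k i]).foldr (· ∘ ·) id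

/-- The action of `D^k δ_λ` on a test function: `φ ↦ (-1)^{‖k‖} (D^k φ)(λ)`. -/
def dkDelta {d : ℕ} (k : Fin d → ℕ) (lam : Rd d) (φ : SchwartzMap (Rd d) ℂ) : ℂ :=
  (-1 : ℂ) ^ (∑ i, k i) * Dmulti k (⇑φ) lam

/-- The exponential `e^{2πi⟨x,w⟩}`. -/
def e2pi {d : ℕ} (x w : Rd d) : ℂ :=
  Complex.exp (((2 * Real.pi : ℝ) : ℂ) * Complex.I * ((⟪x, w⟫ : ℝ) : ℂ))

/-- A trigonometric polynomial: a finite sum `Σ c_ω e^{2πi⟨x,ω⟩}`. -/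
def IsTrigPoly {d : ℕ} (P : Rd d → ℂ) : Prop :=
  ∃ (n : ℕ) (cc : Fin n → ℂ) (w : Fin n → Rd d),
    ∀ x, P x = ∑ i, cc i * e2pi x (w i)

/-- The monomial `x^m = x₁^{m₁} ⋯ x_d^{m_d}` (as a complex number). -/
def monom {d : ℕ} (m : Fin d → ℕ) (x : Rd d) : ℂ := ((∏ i, (x i) ^ (m i) : ℝ) : ℂ)

/-- The total variation of the pure point measure with masses `b` on the open
ball `B(0,r)`: `Σ_{|γ| < r} |b(γ)|` (as an extended nonnegative real). -/
def ballVar {d : ℕ} (b : Rd d → ℂ) (r : ℝ) : ℝ≥0∞ :=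
  ∑' γ : Rd d, if ‖γ‖ < r then (‖b γ‖₊ : ℝ≥0∞) else 0

/-- The pure point measure `μ = Σ_λ a(λ) δ_λ` belongs to `S*(ℝ^d)` and is
represented there by the tempered distribution `f`: its support is countable,
`Σ_λ |a(λ)| |φ(λ)| < ∞` for every Schwartz function `φ`, and the (automatically
continuous) functional `φ ↦ Σ_λ a(λ) φ(λ)` coincides with `f`. -/
def RepMeasure {d : ℕ} (a : Rd d → ℂ) (f : TemperedDist d) : Prop :=
  {x | a x ≠ 0}.Countable ∧
  (∀ φ : SchwartzMap (Rd d) ℂ, Summable fun lam => ‖a lam‖ * ‖φ lam‖) ∧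
  (∀ φ : SchwartzMap (Rd d) ℂ, f φ = ∑' lam, a lam * φ lam)

/-- A continuous function on `ℝ^d` is almost periodic if for every `ε > 0` its
set of `ε`-almost periods is relatively dense. -/
def APFunction {d : ℕ} (g : Rd d → ℂ) : Prop :=
  Continuous g ∧ ∀ ε > (0:ℝ), RelDense {τ : Rd d | ∀ t, ‖g (t + τ) - g t‖ < ε}

/-- A tempered distribution is almost periodic if for every smooth compactly
supported `ψ` the function `t ↦ f(ψ(t - ·))` is almost periodic. -/
def APDistribution {d : ℕ} (f : TemperedDist d) : Prop :=
  ∀ ψ : Rd d → ℂ, ContDiff ℝ (⊤ : ℕ∞) ψ → HasCompactSupport ψ →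
    ∀ Φ : Rd d → SchwartzMap (Rd d) ℂ, (∀ t y, Φ t y = ψ (t - y)) →
      APFunction fun t => f (Φ t)

/-!
Test `f` against a copy of a fixed bump function `g`, shrunk by a factor `r` and centred at a point
`λ` of the support, where `g` is chosen so that at the origin its only nonvanishing derivative is
`D^k`. If `r` is less than the distance from `λ` to the rest of the support, then `f` evaluates to
`± r^(-‖k‖) p_k(λ)`, whose modulus is at least `|p_k(λ)|` once `r ≤ 1`. Conversely, continuity of
`f` bounds this value by finitely many Schwartz seminorms, hence by a power of `(1 + |λ|) / r`.
Polynomial discreteness allows `r` to be a negative power of `1 + |λ|`.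
-/

open scoped ContDiff Topology

section Rescale

variable {E F : Type*} [NormedAddCommGroup E] [NormedSpace ℝ E]
  [NormedAddCommGroup F] [NormedSpace ℝ F]

/-- The Schwartz function `y ↦ g (r⁻¹ • (y - x))`: a copy of `g` shrunk by the factor `r` and
centred at `x`, used to test a distribution near `x` at scale `r`. There is no normalising factor,
so values are preserved and derivatives of order `n` grow by `r⁻¹ ^ n`. -/
def rescale {r : ℝ} (hr : r ≠ 0) (x : E) (g : 𝓢(E, F)) : 𝓢(E, F) :=
  compSubConstCLM ℝ x
    (compCLMOfContinuousLinearEquiv ℝ (ContinuousLinearEquiv.smulLeft (Units.mk0 r hr)⁻¹) g)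

variable {r : ℝ}

theorem tsupport_rescale_subset_ball (hr : 0 < r) (x : E) {g : 𝓢(E, F)}
    (hg : tsupport g ⊆ ball 0 1) : tsupport (rescale hr.ne' x g) ⊆ ball x r := by
  intro y hy
  have hy' : r⁻¹ • (y - x) ∈ tsupport g :=
    tsupport_comp_subset_preimage (f := fun y ↦ r⁻¹ • (y - x)) g (by fun_prop) hy
  have hlt := mem_ball_zero_iff.1 (hg hy')
  rwa [norm_smul, Real.norm_of_nonneg (inv_nonneg.2 hr.le), inv_mul_lt_iff₀ hr, mul_one,
    ← mem_ball_iff_norm] at hlt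

theorem iteratedFDeriv_rescale (hr : r ≠ 0) (x : E) (g : 𝓢(E, F)) (n : ℕ) (y : E) :
    iteratedFDeriv ℝ n (rescale hr x g) y =
      r⁻¹ ^ n • iteratedFDeriv ℝ n g (r⁻¹ • (y - x)) :=
  (iteratedFDeriv_comp_sub (f := fun z ↦ g (r⁻¹ • z)) n x y).trans
    (congrFun (iteratedFDeriv_comp_const_smul r⁻¹ (g.smooth n)) (y - x))

variable (𝕜 : Type*) [NontriviallyNormedField 𝕜] [NormedSpace 𝕜 F] [SMulCommClass ℝ 𝕜 F]

theorem exists_seminorm_rescale_le (g : 𝓢(E, F)) (m n : ℕ) :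
    ∃ C, 0 ≤ C ∧ ∀ (x : E) (r : ℝ) (hr : 0 < r), r ≤ 1 →
      SchwartzMap.seminorm 𝕜 m n (rescale hr.ne' x g) ≤ C * ((1 + ‖x‖) ^ m * r⁻¹ ^ n) := by
  set S : ℝ := 2 ^ m * (Finset.Iic (m, n)).sup (schwartzSeminormFamily 𝕜 E F) g
  have hS : ∀ z, (1 + ‖z‖) ^ m * ‖iteratedFDeriv ℝ n g z‖ ≤ S :=
    one_add_le_sup_seminorm_apply (m := (m, n)) le_rfl le_rfl g
  refine ⟨S, by positivity, fun x r hr hr1 ↦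
    seminorm_le_bound 𝕜 m n _ (by positivity) fun y ↦ ?_⟩
  rw [iteratedFDeriv_rescale, norm_smul, Real.norm_of_nonneg (by positivity)]
  set z : E := r⁻¹ • (y - x)
  have hyz : ‖y‖ ≤ (1 + ‖x‖) * (1 + ‖z‖) :=
    calc ‖y‖ = ‖x + r • z‖ := by simp [z, smul_inv_smul₀ hr.ne']
      _ ≤ ‖x‖ + r * ‖z‖ := by
        simpa only [norm_smul, Real.norm_of_nonneg hr.le] using norm_add_le x (r • z)
      _ ≤ ‖x‖ + 1 * ‖z‖ := by gcongr
      _ ≤ (1 + ‖x‖) * (1 + ‖z‖) := by nlinarith [norm_nonneg x, norm_nonneg z]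
  calc ‖y‖ ^ m * (r⁻¹ ^ n * ‖iteratedFDeriv ℝ n g z‖)
      ≤ ((1 + ‖x‖) * (1 + ‖z‖)) ^ m * (r⁻¹ ^ n * ‖iteratedFDeriv ℝ n g z‖) := by gcongr
    _ = (1 + ‖z‖) ^ m * ‖iteratedFDeriv ℝ n g z‖ * ((1 + ‖x‖) ^ m * r⁻¹ ^ n) := by
        rw [mul_pow]; ring
    _ ≤ S * ((1 + ‖x‖) ^ m * r⁻¹ ^ n) := by gcongr; exact hS z

variable {𝕜} {G : Type*} [NormedAddCommGroup G] [NormedSpace 𝕜 G]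

theorem exists_norm_apply_rescale_le (u : 𝓢(E, F) →L[𝕜] G) :
    ∃ N : ℕ, ∀ g : 𝓢(E, F), ∃ C, 0 ≤ C ∧ ∀ (x : E) (r : ℝ) (hr : 0 < r), r ≤ 1 →
      ‖u (rescale hr.ne' x g)‖ ≤ C * ((1 + ‖x‖) * r⁻¹) ^ N := by
  obtain ⟨s, A, -, hA⟩ := Seminorm.bound_of_continuous (schwartz_withSeminorms 𝕜 E F)
    ((normSeminorm 𝕜 G).comp u.toLinearMap) (continuous_norm.comp u.continuous)
  refine ⟨∑ i ∈ s, (i.1 + i.2), fun g ↦ ?_⟩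
  choose D hD0 hD using fun i : ℕ × ℕ ↦ exists_seminorm_rescale_le 𝕜 g i.1 i.2
  have hDsum : 0 ≤ ∑ i ∈ s, D i := Finset.sum_nonneg fun i _ ↦ hD0 i
  refine ⟨A * ∑ i ∈ s, D i, by positivity, fun x r hr hr1 ↦ ?_⟩
  refine (hA (rescale hr.ne' x g)).trans ?_
  rw [smul_apply, NNReal.smul_def, smul_eq_mul, mul_assoc]
  refine mul_le_mul_of_nonneg_left
    (Seminorm.finset_sup_apply_le (by positivity) fun i hi ↦ (hD i x r hr hr1).trans ?_) A.2
  have hr' : 1 ≤ r⁻¹ := (one_le_inv₀ hr).2 hr1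
  have hx : 1 ≤ 1 + ‖x‖ := le_add_of_nonneg_right (norm_nonneg x)
  have hN : i.1 + i.2 ≤ ∑ i ∈ s, (i.1 + i.2) :=
    Finset.single_le_sum (f := fun i : ℕ × ℕ ↦ i.1 + i.2) (fun _ _ ↦ Nat.zero_le _) hi
  rw [mul_pow]
  gcongr
  · exact Finset.single_le_sum (fun i _ ↦ hD0 i) hi
  · lia
  · lia

end Rescale

section Dmulti

variable {d : ℕ}

theorem Dmulti_induction {P : (Fin d → ℕ) → ((Rd d → ℂ) → Rd d → ℂ) → Prop}
    (zero : P 0 id)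
    (step : ∀ m D i, P m D → P (m + Pi.single i 1) (pderiv' i ∘ D)) (k : Fin d → ℕ) :
    P k (Dmulti k) := by
  have iterate : ∀ m D i n, P m D → P (Pi.single i n + m) ((pderiv' i)^[n] ∘ D) := by
    intro m D i n hm
    induction n with
    | zero => simpa using hm
    | succ n ih =>
      rw [Function.iterate_succ', Function.comp_assoc, Pi.single_add, add_right_comm]
      exact step _ _ _ ih
  have fold : ∀ l : List (Fin d), P (l.map fun i ↦ Pi.single i (k i)).sum
      ((l.map fun i ↦ (pderiv' i)^[k i]).foldr (· ∘ ·) id) := by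
    intro l
    induction l with
    | nil => exact zero
    | cons i l ih => exact iterate _ _ i (k i) ih
  have hk : ((List.finRange d).map fun i ↦ Pi.single i (k i)).sum = k := by
    rw [← Fin.sum_univ_def, Finset.univ_sum_single]
  have hP := fold (List.finRange d)
  rwa [hk] at hP

theorem Dmulti_eventuallyEq {φ ψ : Rd d → ℂ} {x : Rd d} (h : φ =ᶠ[𝓝 x] ψ) (k : Fin d → ℕ) :
    Dmulti k φ =ᶠ[𝓝 x] Dmulti k ψ :=
  Dmulti_induction (P := fun _ D ↦ D φ =ᶠ[𝓝 x] D ψ) h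
    (fun _ _ i hD ↦ hD.fderiv.fun_comp fun L ↦ L (EuclideanSpace.single i 1)) k

theorem tsupport_Dmulti_subset (k : Fin d → ℕ) (φ : Rd d → ℂ) :
    tsupport (Dmulti k φ) ⊆ tsupport φ :=
  Dmulti_induction (P := fun _ D ↦ tsupport (D φ) ⊆ tsupport φ) Subset.rfl
    (fun _ _ _ hD ↦ (tsupport_fderiv_apply_subset ℝ _).trans hD) k

theorem pderiv'_const_mul (i : Fin d) (b : ℂ) (φ : Rd d → ℂ) :
    pderiv' i (fun y ↦ b * φ y) = fun y ↦ b * pderiv' i φ y := by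
  funext y
  exact congrArg (fun D ↦ D y (EuclideanSpace.single i 1))
    (fderiv_const_smul_field (𝕜 := ℝ) (f := φ) b)

theorem pderiv'_comp_smul_sub (i : Fin d) (φ : Rd d → ℂ) (c : ℝ) (a : Rd d) :
    pderiv' i (fun y ↦ φ (c • (y - a))) = fun y ↦ c * pderiv' i φ (c • (y - a)) := by
  funext y
  rw [pderiv', fderiv_comp_sub (f := fun z ↦ φ (c • z)), fderiv_comp_smul, smul_apply,
    Complex.real_smul, pderiv']

theorem Dmulti_comp_smul_sub (k : Fin d → ℕ) (φ : Rd d → ℂ) (c : ℝ) (a : Rd d) :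
    Dmulti k (fun y ↦ φ (c • (y - a))) =
      fun y ↦ (c : ℂ) ^ (∑ i, k i) * Dmulti k φ (c • (y - a)) := by
  refine Dmulti_induction (P := fun m D ↦ D (fun y ↦ φ (c • (y - a))) =
    fun y ↦ (c : ℂ) ^ (∑ i, m i) * D φ (c • (y - a))) (by simp) (fun m D i hD ↦ ?_) k
  simp only [Function.comp_apply, hD, pderiv'_const_mul, pderiv'_comp_smul_sub, Pi.add_apply,
    Finset.sum_add_distrib, Finset.sum_pi_single', Finset.mem_univ, if_true, pow_succ, mul_assoc]

theorem pderiv'_prod {u : Fin d → ℝ → ℂ} (hu : ∀ i, Differentiable ℝ (u i)) (i : Fin d) :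
    pderiv' i (fun z ↦ ∏ j, u j (z j)) =
      fun z ↦ ∏ j, Function.update u i (deriv (u i)) j (z j) := by
  funext z
  have hfactor : ∀ j ∈ Finset.univ, HasFDerivAt (fun z : Rd d ↦ u j (z j))
      ((ContinuousLinearMap.toSpanSingleton ℝ (deriv (u j) (z j))).comp
        (EuclideanSpace.proj (𝕜 := ℝ) j)) z := fun j _ ↦
    (hu j (z j)).hasDerivAt.hasFDerivAt.comp z (EuclideanSpace.proj (𝕜 := ℝ) j).hasFDerivAt
  rw [pderiv', (HasFDerivAt.finsetProd hfactor).fderiv, sum_apply,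
    Finset.sum_eq_single_of_mem i (Finset.mem_univ i) fun j _ hj ↦ by simp [hj],
    ← Finset.prod_erase_mul _ _ (Finset.mem_univ i), Function.update_self]
  have hother : ∏ j ∈ Finset.univ.erase i, Function.update u i (deriv (u i)) j (z j) =
      ∏ j ∈ Finset.univ.erase i, u j (z j) := Finset.prod_congr rfl fun j hj ↦ by
    rw [Function.update_of_ne (Finset.ne_of_mem_erase hj)]
  simp [hother]

theorem Dmulti_prod {u : Fin d → ℝ → ℂ} (hu : ∀ i, ContDiff ℝ ∞ (u i)) (k : Fin d → ℕ) :
    Dmulti k (fun z ↦ ∏ j, u j (z j)) = fun z ↦ ∏ j, iteratedDeriv (k j) (u j) (z j) := by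
  refine Dmulti_induction (P := fun m D ↦ D (fun z ↦ ∏ j, u j (z j)) =
    fun z ↦ ∏ j, iteratedDeriv (m j) (u j) (z j)) (by simp) (fun m D i hD ↦ ?_) k
  have hdiff : ∀ j, Differentiable ℝ (iteratedDeriv (m j) (u j)) := fun j ↦
    (hu j).differentiable_iteratedDeriv (m j) (by exact_mod_cast WithTop.coe_lt_top _)
  rw [Function.comp_apply, hD, pderiv'_prod hdiff]
  funext z
  refine Finset.prod_congr rfl fun j _ ↦ ?_
  obtain rfl | hj := eq_or_ne j i
  · simp [iteratedDeriv_succ]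
  · simp [hj]

end Dmulti

theorem iteratedDeriv_pow_div_factorial_zero {𝕜 : Type*} [NontriviallyNormedField 𝕜] [CharZero 𝕜]
    (m n : ℕ) :
    iteratedDeriv m (fun t : 𝕜 ↦ t ^ n / n.factorial) 0 = if m = n then 1 else 0 := by
  rw [iteratedDeriv_div_const, iteratedDeriv_pow]
  rcases lt_trichotomy m n with h | rfl | h
  · simp [h.ne, Nat.sub_ne_zero_of_lt h]
  · simp [Nat.descFactorial_self, Nat.factorial_ne_zero]
  · simp [h.ne', Nat.descFactorial_of_lt h]

theorem exists_schwartzMap_Dmulti_zero_eq_ite {d : ℕ} (k : Fin d → ℕ) :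
    ∃ g : 𝓢(Rd d, ℂ), tsupport g ⊆ ball 0 1 ∧ ∀ j, Dmulti j g 0 = if j = k then 1 else 0 := by
  let u (i : Fin d) (t : ℝ) : ℂ := (t ^ k i / (k i).factorial : ℝ) • (1 : ℂ)
  have hreal (i) : ContDiff ℝ ∞ fun t : ℝ ↦ t ^ k i / (k i).factorial := by fun_prop
  have hu (i) : ContDiff ℝ ∞ (u i) := (hreal i).smul contDiff_const
  have hu0 (i m) : iteratedDeriv m (u i) 0 = if m = k i then 1 else 0 := by
    rw [iteratedDeriv_smul_const ((hreal i).contDiffAt.of_le (mod_cast le_top)),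
      iteratedDeriv_pow_div_factorial_zero, ite_smul, one_smul, zero_smul]
  let χ : ContDiffBump (0 : Rd d) := ⟨1 / 4, 1 / 2, by norm_num, by norm_num⟩
  let g (z : Rd d) : ℂ := χ z • ∏ i, u i (z i)
  have hg : ContDiff ℝ ∞ g := χ.contDiff.smul <| contDiff_prod fun i _ ↦
    (hu i).comp (EuclideanSpace.proj (𝕜 := ℝ) i).contDiff
  have hg_near : g =ᶠ[𝓝 0] fun z ↦ ∏ i, u i (z i) := by
    filter_upwards [χ.eventuallyEq_one] with z hz
    simp [g, hz]
  refine ⟨HasCompactSupport.toSchwartzMap χ.hasCompactSupport.smul_right hg, ?_, fun j ↦ ?_⟩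
  · calc tsupport g ⊆ tsupport χ := tsupport_smul_subset_left _ _
      _ = closedBall 0 (1 / 2) := χ.tsupport_eq
      _ ⊆ ball 0 1 := closedBall_subset_ball (by norm_num)
  · calc Dmulti j g 0 = ∏ i, iteratedDeriv (j i) (u i) 0 := by
          rw [(Dmulti_eventuallyEq hg_near j).eq_of_nhds, Dmulti_prod hu]; rfl
      _ = if j = k then 1 else 0 := by
          simp only [hu0, Finset.prod_ite_zero, Finset.mem_univ, forall_const, funext_iff,
            Finset.prod_const_one]

section Coefficients

variable {d : ℕ}

theorem PDiscrete.exists_mul_inv_pow_le_dist {A : Set (Rd d)} (hA : PDiscrete A) :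
    ∃ c > (0 : ℝ), c ≤ 1 ∧ ∃ n : ℕ, ∀ x ∈ A, ∀ y ∈ A, x ≠ y →
      c * ((1 + ‖x‖) ^ n)⁻¹ ≤ dist x y := by
  obtain ⟨c, hc, h, hh, hdist⟩ := hA
  refine ⟨min c 1, lt_min hc one_pos, min_le_right _ _, ⌈h⌉₊, fun x hx y hy hxy ↦ ?_⟩
  refine le_trans ?_ (hdist x hx y hy hxy)
  gcongr
  · exact min_le_left _ _
  · have h1 : 1 ≤ 1 + ‖x‖ := le_add_of_nonneg_right (norm_nonneg x)
    split_ifs with hx1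
    · exact inv_le_one_of_one_le₀ (one_le_pow₀ h1)
    · have hx0 : 0 < ‖x‖ := by linarith
      rw [Real.rpow_neg hx0.le]
      gcongr
      calc ‖x‖ ^ h ≤ (1 + ‖x‖) ^ h := by gcongr; linarith
        _ ≤ (1 + ‖x‖) ^ (⌈h⌉₊ : ℝ) := Real.rpow_le_rpow_of_exponent_le h1 (Nat.le_ceil h)
        _ = (1 + ‖x‖) ^ ⌈h⌉₊ := Real.rpow_natCast _ _

variable {f : TemperedDist d} {I : Finset (Fin d → ℕ)} {p : (Fin d → ℕ) → Rd d → ℂ}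

theorem apply_rescale_eq_coeff_mul
    (hrep : ∀ φ : 𝓢(Rd d, ℂ), HasCompactSupport φ →
      f φ = ∑' x, ∑ k ∈ I, p k x * dkDelta k x φ)
    {k : Fin d → ℕ} (hk : k ∈ I) {g : 𝓢(Rd d, ℂ)} (hg : tsupport g ⊆ ball 0 1)
    (hgk : ∀ j, Dmulti j g 0 = if j = k then 1 else 0)
    {x : Rd d} {r : ℝ} (hr : 0 < r) (hsep : ∀ j, ∀ y ∈ ball x r, y ≠ x → p j y = 0) :
    f (rescale hr.ne' x g) = p k x * (-(r⁻¹ : ℂ)) ^ ∑ i, k i := by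
  set φ := rescale hr.ne' x g
  have hφ : tsupport φ ⊆ ball x r := tsupport_rescale_subset_ball hr x hg
  have hcompact : HasCompactSupport φ :=
    isCompact_of_isClosed_isBounded (isClosed_tsupport φ) (isBounded_ball.subset hφ)
  have hoff : ∀ y ≠ x, ∑ j ∈ I, p j y * dkDelta j y φ = 0 := fun y hyx ↦
    Finset.sum_eq_zero fun j _ ↦ by
      by_cases hy : y ∈ ball x r
      · rw [hsep j y hy hyx, zero_mul]
      · have hD : Dmulti j φ y = 0 := image_eq_zero_of_notMem_tsupport fun h ↦
          hy (hφ (tsupport_Dmulti_subset j φ h))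
        rw [dkDelta, hD, mul_zero, mul_zero]
  have hat (j) : dkDelta j x φ = if j = k then (-(r⁻¹ : ℂ)) ^ ∑ i, k i else 0 := by
    have hD : Dmulti j φ x = (r⁻¹ : ℂ) ^ (∑ i, j i) * Dmulti j g 0 := by
      have hscale := congrFun (Dmulti_comp_smul_sub j g r⁻¹ x) x
      rwa [sub_self, smul_zero, Complex.ofReal_inv] at hscale
    rw [dkDelta, hD, hgk, mul_ite, mul_ite, mul_one, mul_zero, mul_zero, ← mul_pow, neg_one_mul]
    split_ifs with hjk
    · rw [hjk]
    · rfl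
  rw [hrep φ hcompact, tsum_eq_single x hoff]
  simp [hat, hk]

theorem norm_coeff_le_norm_apply_rescale
    (hrep : ∀ φ : 𝓢(Rd d, ℂ), HasCompactSupport φ →
      f φ = ∑' x, ∑ k ∈ I, p k x * dkDelta k x φ)
    {k : Fin d → ℕ} (hk : k ∈ I) {g : 𝓢(Rd d, ℂ)} (hg : tsupport g ⊆ ball 0 1)
    (hgk : ∀ j, Dmulti j g 0 = if j = k then 1 else 0)
    {x : Rd d} {r : ℝ} (hr : 0 < r) (hr1 : r ≤ 1)
    (hsep : ∀ j, ∀ y ∈ ball x r, y ≠ x → p j y = 0) :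
    ‖p k x‖ ≤ ‖f (rescale hr.ne' x g)‖ := by
  rw [apply_rescale_eq_coeff_mul hrep hk hg hgk hr hsep, norm_mul, norm_pow, norm_neg, norm_inv,
    Complex.norm_of_nonneg hr.le]
  exact le_mul_of_one_le_right (norm_nonneg _) (one_le_pow₀ ((one_le_inv₀ hr).2 hr1))

theorem exists_norm_coeff_le {A : Set (Rd d)} (hsupp : ∀ k x, p k x ≠ 0 → x ∈ A)
    (hA : PDiscrete A)
    (hrep : ∀ φ : 𝓢(Rd d, ℂ), HasCompactSupport φ →
      f φ = ∑' x, ∑ k ∈ I, p k x * dkDelta k x φ) :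
    ∃ T : ℕ, ∃ C : ℝ, ∀ k ∈ I, ∀ x, ‖p k x‖ ≤ C * (1 + ‖x‖) ^ T := by
  obtain ⟨c, hc, hc1, n, hdist⟩ := hA.exists_mul_inv_pow_le_dist
  obtain ⟨N, hN⟩ := exists_norm_apply_rescale_le f
  choose g hg hgk using exists_schwartzMap_Dmulti_zero_eq_ite (d := d)
  choose C hC0 hC using fun k ↦ hN (g k)
  have hCsum : 0 ≤ ∑ k ∈ I, C k := Finset.sum_nonneg fun k _ ↦ hC0 k
  refine ⟨(n + 1) * N, (∑ k ∈ I, C k) * c⁻¹ ^ N, fun k hk x ↦ ?_⟩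
  obtain hp | hp := eq_or_ne (p k x) 0
  · rw [hp, norm_zero]; positivity
  set r : ℝ := c * ((1 + ‖x‖) ^ n)⁻¹ with hr_def
  have hr : 0 < r := by positivity
  have hr1 : r ≤ 1 := mul_le_one₀ hc1 (by positivity)
    (inv_le_one_of_one_le₀ (one_le_pow₀ (le_add_of_nonneg_right (norm_nonneg x))))
  have hsep : ∀ j, ∀ y ∈ ball x r, y ≠ x → p j y = 0 := fun j y hy hyx ↦ by
    by_contra hpy
    exact (mem_ball'.1 hy).not_ge (hdist x (hsupp k x hp) y (hsupp j y hpy) hyx.symm)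
  calc ‖p k x‖ ≤ ‖f (rescale hr.ne' x (g k))‖ :=
        norm_coeff_le_norm_apply_rescale hrep hk (hg k) (hgk k) hr hr1 hsep
    _ ≤ C k * ((1 + ‖x‖) * r⁻¹) ^ N := hC k x r hr hr1
    _ ≤ (∑ k ∈ I, C k) * ((1 + ‖x‖) * r⁻¹) ^ N := by
        gcongr
        exact Finset.single_le_sum (fun k _ ↦ hC0 k) hk
    _ = (∑ k ∈ I, C k) * c⁻¹ ^ N * (1 + ‖x‖) ^ ((n + 1) * N) := by
        rw [hr_def, mul_inv, inv_inv, pow_mul, pow_succ, mul_pow, mul_pow, mul_pow]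
        ring

end Coefficients

/-- (Proposition 1 ii.) If a tempered distribution
`f = Σ_{λ∈Λ} Σ_{‖k‖≤K} p_k(λ) D^k δ_λ` on `ℝ^d` has polynomially discrete
support `Λ`, then there is `T < ∞` such that `p_k(λ) = O(|λ|^T)` as `λ → ∞`
for every `k` with `‖k‖ ≤ K`. -/
theorem statement8 {d : ℕ} (f : TemperedDist d) (Λ : Set (Rd d)) (K : ℕ)
    (p : (Fin d → ℕ) → Rd d → ℂ)
    (hsupp : ∀ k x, p k x ≠ 0 → x ∈ Λ)
    (hΛ : PDiscrete Λ)
    (hrep : ∀ φ : SchwartzMap (Rd d) ℂ, HasCompactSupport (⇑φ) →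
      f φ = ∑' x : Rd d, ∑ k ∈ mIdx d K, p k x * dkDelta k x φ) :
    ∃ T C R : ℝ, ∀ k ∈ mIdx d K, ∀ x : Rd d, R ≤ ‖x‖ → ‖p k x‖ ≤ C * ‖x‖ ^ T := by
  obtain ⟨T, C, hC⟩ := exists_norm_coeff_le hsupp hΛ hrep
  refine ⟨T, |C| * 2 ^ T, 1, fun k hk x hx ↦ ?_⟩
  calc ‖p k x‖ ≤ C * (1 + ‖x‖) ^ T := hC k hk x
    _ ≤ |C| * (2 * ‖x‖) ^ T := by gcongr; exacts [le_abs_self C, by linarith]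
    _ = |C| * 2 ^ T * ‖x‖ ^ (T : ℝ) := by rw [mul_pow, Real.rpow_natCast, mul_assoc]
end
end

section
/- Let f be a tempered distribution on ℝ^d whose Fourier transform f̂ is a purely point measure f̂ = Σ_n a_n δ_{γ_n} satisfying |f̂|(B(0,r)) = Σ_{n : |γ_n| < r} |a_n| = O(r^T) as r → ∞ for some T < ∞. Then f is an almost periodic distribution. -/
open MeasureTheory SchwartzMap Metric Set
open scoped Pointwise RealInnerProductSpace ENNReal NNReal

noncomputable section

/-!
By Fourier inversion, `f(φ(t - ·)) = Σ_w c_w e^{2πi⟨t, w⟩}` with absolutely summable coefficients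
`c_w = b_w 𝓕⁻[φ(-·)](w)`, because `b` integrates Schwartz functions. Such a sum is a continuous
function on the compact group of all families `(z_w)_w` of unit complex numbers, pulled back along
the homomorphism `t ↦ (e^{2πi⟨t, w⟩})_w`. A homomorphism into a compact group returns to any
neighbourhood of the identity along a relatively dense set, and a continuous function on a compact
group is uniformly continuous, so the pullback is almost periodic.
-/

open Filter
open scoped FourierTransform Topology Uniformity

section CompactGroup

variable {V K : Type*} [AddGroup V] [Group K] [UniformSpace K] [IsRightUniformGroup K]
  [CompactSpace K]

theorem exists_finite_forall_exists_addChar_sub_mem (χ : AddChar V K) {U : Set K}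
    (hU : U ∈ 𝓝 1) : ∃ F : Set V, F.Finite ∧ ∀ x, ∃ p ∈ F, χ (x - p) ∈ U := by
  have hW : {z : K × K | z.1 / z.2 ∈ U} ∈ 𝓤 K := by
    rw [uniformity_eq_comap_nhds_one_swapped]
    exact preimage_mem_comap hU
  have htb : TotallyBounded (χ '' univ) := isCompact_univ.totallyBounded.subset (subset_univ _)
  obtain ⟨F, -, hF, hcover⟩ := exists_subset_image_finite_and.1 (htb.exists_subset hW)
  refine ⟨F, hF, fun x => ?_⟩
  rw [biUnion_image] at hcover
  obtain ⟨p, hp, hxp⟩ := mem_iUnion₂.1 (hcover (mem_image_of_mem χ (mem_univ x)))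
  refine ⟨p, hp, ?_⟩
  rwa [sub_eq_add_neg, χ.map_add_eq_mul, χ.map_neg_eq_inv, ← div_eq_mul_inv]

theorem eventually_nhds_one_forall_dist_mul_lt {E : Type*} [PseudoMetricSpace E] {g : K → E}
    (hg : Continuous g) {ε : ℝ} (hε : 0 < ε) :
    ∀ᶠ u in 𝓝 (1 : K), ∀ z, dist (g (u * z)) (g z) < ε := by
  have h := CompactSpace.uniformContinuous_of_continuous hg (dist_mem_uniformity hε)
  rw [uniformity_eq_comap_nhds_one_swapped] at h
  obtain ⟨U, hU, hUg⟩ := h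
  filter_upwards [hU] with u hu z
  have hz : (u * z, z) ∈ (fun x : K × K => x.1 / x.2) ⁻¹' U := by
    rwa [mem_preimage, mul_div_cancel_right]
  exact hUg hz

end CompactGroup

section AlmostPeriodic

variable {d : ℕ}

theorem relDense_of_finite_of_forall_exists_sub_mem {A F : Set (Rd d)} (hF : F.Finite)
    (h : ∀ x, ∃ p ∈ F, x - p ∈ A) : RelDense A := by
  obtain ⟨R, hR, hFR⟩ := hF.isBounded.exists_pos_norm_le
  refine ⟨R, hR, fun x => ?_⟩
  obtain ⟨p, hp, hxp⟩ := h x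
  exact ⟨x - p, hxp, by simpa only [dist_self_sub_right] using hFR p hp⟩

theorem apFunction_comp_addChar {K : Type*} [Group K] [UniformSpace K] [IsRightUniformGroup K]
    [CompactSpace K] {χ : AddChar (Rd d) K} (hχ : Continuous χ) {g : K → ℂ} (hg : Continuous g) :
    APFunction (g ∘ χ) := by
  refine ⟨hg.comp hχ, fun ε hε => ?_⟩
  obtain ⟨F, hF, hreturn⟩ := exists_finite_forall_exists_addChar_sub_mem χ
    (eventually_nhds_one_forall_dist_mul_lt hg hε)
  refine relDense_of_finite_of_forall_exists_sub_mem hF fun x => ?_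
  obtain ⟨p, hp, hxp⟩ := hreturn x
  refine ⟨p, hp, fun t => ?_⟩
  rw [Function.comp_apply, Function.comp_apply, add_comm t, χ.map_add_eq_mul, ← dist_eq_norm]
  exact hxp (χ t)

end AlmostPeriodic

section BohrMap

variable {V : Type*} [NormedAddCommGroup V] [InnerProductSpace ℝ V]

variable (V) in
/-- The homomorphism `t ↦ (e^{2πi⟨t, w⟩})_w` from an inner product space into a compact group. The
closure of its image is a model of the Bohr compactification of `V` when `V` is
finite-dimensional. -/
def bohrMap : AddChar V (V → Circle) where
  toFun t w := 𝐞 ⟪t, w⟫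
  map_zero_eq_one' := by ext; simp
  map_add_eq_mul' s t := by ext; simp [inner_add_left, AddChar.map_add_eq_mul]

theorem continuous_bohrMap : Continuous (bohrMap V) :=
  continuous_pi fun _ => Real.continuous_fourierChar.comp (by fun_prop)

end BohrMap

theorem continuous_tsum_mul_circle {ι : Type*} {c : ι → ℂ} (hc : Summable fun i => ‖c i‖) :
    Continuous fun z : ι → Circle => ∑' i, c i * z i :=
  continuous_tsum (fun i => by fun_prop) hc fun i z => by rw [norm_mul, Circle.norm_coe, mul_one]

theorem apFunction_tsum_mul_fourierChar {d : ℕ} {c : Rd d → ℂ} (hc : Summable fun w => ‖c w‖) :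
    APFunction fun t => ∑' w, c w * 𝐞 ⟪t, w⟫ :=
  apFunction_comp_addChar continuous_bohrMap (continuous_tsum_mul_circle hc)

theorem fourierInv_comp_sub_right {V E : Type*} [NormedAddCommGroup V] [InnerProductSpace ℝ V]
    [FiniteDimensional ℝ V] [MeasurableSpace V] [BorelSpace V] [NormedAddCommGroup E]
    [NormedSpace ℂ E] (f : V → E) (t w : V) :
    𝓕⁻ (fun y => f (y - t)) w = 𝐞 ⟪t, w⟫ • 𝓕⁻ f w := by
  have h := congrFun (VectorFourier.fourierIntegral_comp_add_right 𝐞 volume (-innerₗ V) f (-t)) w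
  simpa [FourierTransformInv.fourierInv, sub_eq_add_neg, Function.comp_def] using h

theorem RepMeasure.apply_eq_tsum_fourierInv {d : ℕ} {f : TemperedDist d} {b : Rd d → ℂ}
    (hf : RepMeasure b (fourierTD f)) (φ : SchwartzMap (Rd d) ℂ) :
    f φ = ∑' w, b w * (𝓕⁻ φ) w := by
  obtain ⟨-, -, hrep⟩ := hf
  rw [← hrep, fourierTD, ContinuousLinearMap.comp_apply, fourierTransformCLM_apply,
    FourierTransform.fourier_fourierInv_eq]

theorem statement9_general {d : ℕ} {f : TemperedDist d} {b : Rd d → ℂ}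
    (hf : RepMeasure b (fourierTD f)) {ψ : Rd d → ℂ} {Φ : Rd d → SchwartzMap (Rd d) ℂ}
    (hΦ : ∀ t y, Φ t y = ψ (t - y)) : APFunction fun t => f (Φ t) := by
  have hshift (t w : Rd d) : (𝓕⁻ (Φ t)) w = 𝐞 ⟪t, w⟫ • (𝓕⁻ (Φ 0)) w := by
    have htranslate : ⇑(Φ t) = fun y => Φ 0 (y - t) := by
      ext y
      rw [hΦ, hΦ, zero_sub, neg_sub]
    rw [fourierInv_coe, fourierInv_coe, htranslate, fourierInv_comp_sub_right]
  have hexpand (t : Rd d) : f (Φ t) = ∑' w, b w * (𝓕⁻ (Φ 0)) w * 𝐞 ⟪t, w⟫ := by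
    rw [hf.apply_eq_tsum_fourierInv]
    exact tsum_congr fun w => by rw [hshift, Circle.smul_def, smul_eq_mul]; ring
  simp only [hexpand]
  apply apFunction_tsum_mul_fourierChar
  simpa only [norm_mul] using hf.2.1 (𝓕⁻ (Φ 0))

/-- (Proposition 2.) If the Fourier transform of a tempered
distribution `f` on `ℝ^d` is a pure point measure `f̂ = Σ_n a_n δ_{γ_n}` with
`|f̂|(B(0,r)) = O(r^T)` for some `T < ∞`, then `f` is an almost periodic
distribution. -/
theorem statement9 {d : ℕ} (f : TemperedDist d) (b : Rd d → ℂ)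
    (hrepF : RepMeasure b (fourierTD f))
    (hvar : ∃ T C r₀ : ℝ, ∀ r ≥ r₀, ballVar b r ≤ ENNReal.ofReal (C * r ^ T)) :
    APDistribution f :=
  fun _ _ _ _ hΦ => statement9_general hrepF hΦ
end
end

section
/- Let f = Σ_{λ∈Λ} Σ_{‖k‖≤K} p_k(λ) D^k δ_λ be a tempered distribution on ℝ^d with locally finite support Λ and locally finite spectrum Γ = supp f̂, and suppose that Σ_{|λ|≤r} Σ_{‖k‖≤K} |p_k(λ)| = O(r^{d+M}) as r → ∞ for some integer M ≥ 0. Then f̂ has the form f̂ = Σ_{γ∈Γ} Σ_{‖m‖≤M} q_m(γ) D^m δ_γ with m ∈ (ℕ∪{0})^d, and for ‖m‖ = M one has q_m(γ) = O(|γ|^K) as γ → ∞. -/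
open MeasureTheory SchwartzMap Metric Set
open scoped Pointwise RealInnerProductSpace ENNReal NNReal

noncomputable section

/-!
The idea is to test `f̂` on functions living at a small scale `ε` around a point `γ`. The Fourier
transform of such a function is of size `ε^d (1 + |γ|)^K`, together with its derivatives of order at
most `K`, on the ball of radius `1 / ε`, and it decays rapidly outside. Summing over dyadic shells,
the growth `O(r^{d+M})` of the coefficients of `f` thus bounds its value under `f̂` by a multiple of
`ε^{-M} (1 + |γ|)^K`.

A test function vanishing to order `L` at `γ` and cut off at radius `ε` is moreover of size `ε^L` at
scale `ε`. Since the spectrum is locally finite, the value of `f̂` on the cut-off function does not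
depend on `ε` when `ε` is small. For `L = M + 1` this value is `O(ε)`, hence zero, so that near `γ`
the distribution `f̂` only sees the derivatives of order at most `M` at `γ`. For `L = M`, applied to
the monomials of degree `M` centred at `γ`, the powers of `ε` cancel and the coefficients of order
`M` are bounded by a multiple of `(1 + |γ|)^K`.
-/

section ScaledBound

open Finset
open scoped ContDiff

variable {E F : Type*} [NormedAddCommGroup E] [NormedSpace ℝ E]
  [NormedAddCommGroup F] [NormedSpace ℝ F]

/-- The derivatives of `φ` at `y` of order at most `N` are bounded by `A` once lengths are measured
in units of `ε`. -/
def ScaledBoundAt (N : ℕ) (ε A : ℝ) (φ : E → F) (y : E) : Prop :=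
  ∀ j ≤ N, ε ^ j * ‖iteratedFDeriv ℝ j φ y‖ ≤ A

namespace ScaledBoundAt

variable {N : ℕ} {ε δ A B : ℝ} {φ : E → F} {y : E}

lemma nonneg (h : ScaledBoundAt N ε A φ y) : 0 ≤ A := by
  have h0 := h 0 N.zero_le
  rw [pow_zero, one_mul] at h0
  exact (norm_nonneg _).trans h0

lemma norm_le (h : ScaledBoundAt N 1 A φ y) {j : ℕ} (hj : j ≤ N) :
    ‖iteratedFDeriv ℝ j φ y‖ ≤ A := by
  simpa only [one_pow, one_mul] using h j hj

lemma mono_scale (hδ : 0 ≤ δ) (hδε : δ ≤ ε) (h : ScaledBoundAt N ε A φ y) :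
    ScaledBoundAt N δ A φ y := fun j hj => by
  grw [hδε]
  exact h j hj

lemma of_notMem_tsupport (hA : 0 ≤ A) (hy : y ∉ tsupport φ) : ScaledBoundAt N ε A φ y := by
  intro j _
  have : iteratedFDeriv ℝ j φ y = 0 := by
    by_contra hne
    exact hy (support_iteratedFDeriv_subset j hne)
  simpa [this] using hA

lemma smul {𝕜 : Type*} [NontriviallyNormedField 𝕜] [NormedAlgebra ℝ 𝕜] [NormedSpace 𝕜 F]
    [IsScalarTower ℝ 𝕜 F] {χ : E → 𝕜} (hχ : ContDiff ℝ ∞ χ) (hφ : ContDiff ℝ ∞ φ) (hε : 0 ≤ ε)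
    (h₁ : ScaledBoundAt N ε B χ y) (h₂ : ScaledBoundAt N ε A φ y) :
    ScaledBoundAt N ε (2 ^ N * B * A) (fun z => χ z • φ z) y := by
  intro j hj
  have hA := h₂.nonneg
  have hB := h₁.nonneg
  calc ε ^ j * ‖iteratedFDeriv ℝ j (fun z => χ z • φ z) y‖
      ≤ ε ^ j * ∑ i ∈ range (j + 1), (j.choose i : ℝ) * ‖iteratedFDeriv ℝ i χ y‖ *
          ‖iteratedFDeriv ℝ (j - i) φ y‖ := by
        gcongr
        exact norm_iteratedFDeriv_smul_le hχ hφ y (by exact_mod_cast le_top)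
    _ = ∑ i ∈ range (j + 1), (j.choose i : ℝ) * ((ε ^ i * ‖iteratedFDeriv ℝ i χ y‖) *
          (ε ^ (j - i) * ‖iteratedFDeriv ℝ (j - i) φ y‖)) := by
        rw [mul_sum]
        refine sum_congr rfl fun i hi => ?_
        rw [← pow_mul_pow_sub ε (mem_range_succ_iff.1 hi)]
        ring
    _ ≤ ∑ i ∈ range (j + 1), (j.choose i : ℝ) * (B * A) := by
        refine sum_le_sum fun i hi => ?_
        have hij := mem_range_succ_iff.1 hi
        gcongr
        · exact h₁ i (hij.trans hj)
        · exact h₂ (j - i) ((j.sub_le i).trans hj)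
    _ = 2 ^ j * (B * A) := by
        rw [← sum_mul]
        congr 1
        exact_mod_cast Nat.sum_range_choose j
    _ ≤ 2 ^ N * B * A := by
        rw [mul_assoc]
        gcongr
        exact one_le_two

lemma comp_rescale (hφ : ContDiff ℝ ∞ φ) (hε : 0 < ε) {γ : E}
    (h : ScaledBoundAt N 1 A φ (ε⁻¹ • (y - γ))) :
    ScaledBoundAt N ε A (fun z => φ (ε⁻¹ • (z - γ))) y := by
  intro j hj
  have hderiv : iteratedFDeriv ℝ j (fun z => φ (ε⁻¹ • (z - γ))) y =
      ε⁻¹ ^ j • iteratedFDeriv ℝ j φ (ε⁻¹ • (y - γ)) := by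
    rw [iteratedFDeriv_comp_sub (f := fun z => φ (ε⁻¹ • z)),
      iteratedFDeriv_comp_const_smul _ (hφ.of_le (by exact_mod_cast le_top))]
  rw [hderiv, norm_smul, norm_pow, norm_inv, Real.norm_of_nonneg hε.le, ← mul_assoc, ← mul_pow,
    mul_inv_cancel₀ hε.ne', one_pow, one_mul]
  exact h.norm_le hj

end ScaledBoundAt

lemma norm_iteratedFDeriv_sub_le_of_jet_eq_zero {φ : E → F} (hφ : ContDiff ℝ ∞ φ) {γ : E} {L : ℕ}
    {A : ℝ} (hA : ∀ y, ‖iteratedFDeriv ℝ L φ y‖ ≤ A)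
    (hjet : ∀ j < L, iteratedFDeriv ℝ j φ γ = 0) {i : ℕ} (hi : i ≤ L) (y : E) :
    ‖iteratedFDeriv ℝ (L - i) φ y‖ ≤ A * ‖y - γ‖ ^ i := by
  induction i generalizing y with
  | zero => simpa using hA y
  | succ i ih =>
    have hA0 : 0 ≤ A := (norm_nonneg _).trans (hA γ)
    have hbound : ∀ z ∈ closedBall γ ‖y - γ‖,
        ‖fderiv ℝ (iteratedFDeriv ℝ (L - (i + 1)) φ) z‖ ≤ A * ‖y - γ‖ ^ i := by
      intro z hz
      rw [norm_fderiv_iteratedFDeriv, show L - (i + 1) + 1 = L - i by omega]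
      grw [ih (by omega) z, mem_closedBall_iff_norm.1 hz]
    have hmvt := (convex_closedBall γ ‖y - γ‖).norm_image_sub_le_of_norm_fderiv_le
      (fun z _ => (hφ.differentiable_iteratedFDeriv
        (WithTop.coe_lt_coe.2 (ENat.natCast_lt_top _))).differentiableAt) hbound
      (mem_closedBall_self (norm_nonneg _)) (mem_closedBall_iff_norm.2 le_rfl)
    rwa [hjet _ (by omega), sub_zero, mul_assoc, ← pow_succ] at hmvt

lemma ScaledBoundAt.of_jet_eq_zero {φ : E → F} (hφ : ContDiff ℝ ∞ φ) {γ y : E} {L N : ℕ}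
    {ε A : ℝ} (hA : ∀ z, ScaledBoundAt (max L N) 1 A φ z)
    (hjet : ∀ j < L, iteratedFDeriv ℝ j φ γ = 0) (hε : ε ≤ 1) (hy : ‖y - γ‖ ≤ ε) :
    ScaledBoundAt N ε (A * ε ^ L) φ y := by
  intro j hj
  have hA0 := (hA y).nonneg
  have hε0 : 0 ≤ ε := (norm_nonneg _).trans hy
  rcases le_total j L with hjL | hLj
  · have htaylor := norm_iteratedFDeriv_sub_le_of_jet_eq_zero hφ
      (fun z => (hA z).norm_le (le_max_left L N)) hjet (L.sub_le j) y
    rw [Nat.sub_sub_self hjL] at htaylor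
    calc ε ^ j * ‖iteratedFDeriv ℝ j φ y‖ ≤ ε ^ j * (A * ε ^ (L - j)) := by grw [htaylor, hy]
      _ = A * ε ^ L := by rw [mul_left_comm, pow_mul_pow_sub ε hjL]
  · calc ε ^ j * ‖iteratedFDeriv ℝ j φ y‖ ≤ ε ^ L * A := by
          grw [(hA y).norm_le (hj.trans (le_max_right L N)), pow_le_pow_of_le_one hε0 hε hLj]
      _ = A * ε ^ L := mul_comm _ _

lemma exists_forall_pow_mul_norm_iteratedFDeriv_le (φ : 𝓢(E, F)) (k N : ℕ) :
    ∃ S, ∀ j ≤ N, ∀ y, ‖y‖ ^ k * ‖iteratedFDeriv ℝ j φ y‖ ≤ S := by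
  refine ⟨∑ j ∈ range (N + 1), SchwartzMap.seminorm ℝ k j φ, fun j hj y => ?_⟩
  exact (SchwartzMap.le_seminorm ℝ k j φ y).trans <|
    single_le_sum (f := fun j => SchwartzMap.seminorm ℝ k j φ) (fun _ _ => apply_nonneg _ _)
      (mem_range_succ_iff.2 hj)

lemma exists_forall_scaledBoundAt (φ : 𝓢(E, F)) (N : ℕ) : ∃ A, ∀ y, ScaledBoundAt N 1 A φ y := by
  obtain ⟨A, hA⟩ := exists_forall_pow_mul_norm_iteratedFDeriv_le φ 0 N
  exact ⟨A, fun y j hj => by simpa using hA j hj y⟩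

end ScaledBound

section Cutoff

open Filter
open scoped ContDiff Topology

variable {E : Type*} [NormedAddCommGroup E] [NormedSpace ℝ E] [FiniteDimensional ℝ E]

variable (E) in
/-- A complex-valued smooth function equal to `1` on the ball of radius `1 / 2` around the origin
and supported in the unit ball, from which cutoffs at all places and scales are built. -/
def unitCutoff : E → ℂ :=
  let bump : ContDiffBump (0 : E) := ⟨1 / 2, 1, by norm_num, by norm_num⟩
  fun x => (bump x : ℂ)

/-- The smooth cutoff equal to `1` on the ball of radius `ε / 2` around `γ` and supported in the
ball of radius `ε`. -/
def cutoff (γ : E) (ε : ℝ) : E → ℂ := fun y => unitCutoff E (ε⁻¹ • (y - γ))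

lemma contDiff_unitCutoff : ContDiff ℝ ∞ (unitCutoff E) :=
  Complex.ofRealCLM.contDiff.comp (ContDiffBump.contDiff _)

lemma unitCutoff_eq_one {x : E} (hx : ‖x‖ ≤ 1 / 2) : unitCutoff E x = 1 :=
  Complex.ofReal_eq_one.2 <| ContDiffBump.one_of_mem_closedBall _ (mem_closedBall_zero_iff.2 hx)

lemma unitCutoff_eq_zero {x : E} (hx : 1 ≤ ‖x‖) : unitCutoff E x = 0 :=
  Complex.ofReal_eq_zero.2 <| ContDiffBump.zero_of_le_dist _ (by simpa using hx)

lemma contDiff_cutoff (γ : E) (ε : ℝ) : ContDiff ℝ ∞ (cutoff γ ε) :=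
  contDiff_unitCutoff.comp (by fun_prop)

lemma cutoff_eq_one {γ y : E} {ε : ℝ} (hε : 0 < ε) (hy : ‖y - γ‖ ≤ ε / 2) :
    cutoff γ ε y = 1 := by
  apply unitCutoff_eq_one
  rw [norm_smul, norm_inv, Real.norm_of_nonneg hε.le, inv_mul_le_iff₀ hε]
  linarith

lemma tsupport_cutoff_subset (γ : E) {ε : ℝ} (hε : 0 < ε) :
    tsupport (cutoff γ ε) ⊆ closedBall γ ε := by
  refine closure_minimal (fun y hy => ?_) isClosed_closedBall
  contrapose! hy
  rw [mem_closedBall_iff_norm, not_le] at hy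
  rw [Function.notMem_support]
  apply unitCutoff_eq_zero
  rw [norm_smul, norm_inv, Real.norm_of_nonneg hε.le, le_inv_mul_iff₀ hε]
  linarith

lemma hasCompactSupport_cutoff (γ : E) {ε : ℝ} (hε : 0 < ε) : HasCompactSupport (cutoff γ ε) :=
  have := FiniteDimensional.proper_real E
  (isCompact_closedBall γ ε).of_isClosed_subset (isClosed_tsupport _) (tsupport_cutoff_subset γ hε)

lemma hasTemperateGrowth_cutoff (γ : E) {ε : ℝ} (hε : 0 < ε) : (cutoff γ ε).HasTemperateGrowth :=
  (hasCompactSupport_cutoff γ hε).hasTemperateGrowth (contDiff_cutoff γ ε)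

variable (E) in
lemma exists_scaledBoundAt_cutoff (N : ℕ) :
    ∃ B, ∀ (γ : E) {ε : ℝ}, 0 < ε → ∀ y, ScaledBoundAt N ε B (cutoff γ ε) y := by
  have hunit : unitCutoff E = cutoff 0 1 := by
    ext
    simp [cutoff]
  have hcompact : HasCompactSupport (unitCutoff E) := hunit ▸ hasCompactSupport_cutoff 0 one_pos
  obtain ⟨B, hB⟩ := exists_forall_scaledBoundAt (hcompact.toSchwartzMap contDiff_unitCutoff) N
  exact ⟨B, fun γ ε hε y => (hB _).comp_rescale contDiff_unitCutoff hε⟩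

/-- Localization of test functions to the ball of radius `ε` around `γ`, by multiplication with
`cutoff γ ε`. -/
def localize (γ : E) (ε : ℝ) : 𝓢(E, ℂ) →L[ℂ] 𝓢(E, ℂ) :=
  smulLeftCLM ℂ (cutoff γ ε)

section

variable (γ : E) {ε : ℝ} (φ : 𝓢(E, ℂ))

lemma coe_localize (hε : 0 < ε) : ⇑(localize γ ε φ) = fun y => cutoff γ ε y • φ y :=
  smulLeftCLM_apply (hasTemperateGrowth_cutoff γ hε) φ

lemma tsupport_localize_subset (hε : 0 < ε) : tsupport (localize γ ε φ) ⊆ closedBall γ ε :=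
  (tsupport_smulLeftCLM_subset _ φ).trans <|
    inter_subset_right.trans (tsupport_cutoff_subset γ hε)

lemma hasCompactSupport_localize (hε : 0 < ε) : HasCompactSupport (localize γ ε φ) :=
  (hasCompactSupport_cutoff γ hε).mono' <|
    (subset_tsupport _).trans ((tsupport_smulLeftCLM_subset _ φ).trans inter_subset_right)

lemma localize_eventuallyEq_of_norm_lt (hε : 0 < ε) {x : E} (hx : ‖x - γ‖ < ε / 2) :
    localize γ ε φ =ᶠ[𝓝 x] φ := by
  filter_upwards [isOpen_ball.mem_nhds (mem_ball_iff_norm.2 hx)] with y hy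
  simp only [coe_localize γ φ hε, cutoff_eq_one hε (mem_ball_iff_norm.1 hy).le, one_smul]

lemma localize_eventuallyEq_zero (hε : 0 < ε) {x : E} (hx : ε < ‖x - γ‖) :
    localize γ ε φ =ᶠ[𝓝 x] 0 := by
  rw [← notMem_tsupport_iff_eventuallyEq]
  intro hmem
  exact hx.not_ge (mem_closedBall_iff_norm.1 (tsupport_localize_subset γ φ hε hmem))

end

variable (E) in
lemma exists_scaledBoundAt_localize (N : ℕ) :
    ∃ B, 0 ≤ B ∧ ∀ {δ ε A : ℝ} {γ y : E} {φ : 𝓢(E, ℂ)}, 0 ≤ δ → δ ≤ ε → 0 < ε →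
      ScaledBoundAt N δ A φ y → ScaledBoundAt N δ (B * A) (localize γ ε φ) y := by
  obtain ⟨B, hB⟩ := exists_scaledBoundAt_cutoff E N
  have hB0 : 0 ≤ B := (hB 0 one_pos 0).nonneg
  refine ⟨2 ^ N * B, by positivity, fun {δ ε A γ y φ} hδ hδε hε hφ => ?_⟩
  rw [coe_localize γ φ hε]
  exact ((hB γ hε y).mono_scale hδ hδε).smul (contDiff_cutoff γ ε) (φ.smooth ⊤) hδ hφ

lemma exists_seminorm_localize_sub_le (φ : 𝓢(E, ℂ)) (k n : ℕ) :
    ∃ C, ∀ R ≥ (1 : ℝ), SchwartzMap.seminorm ℝ k n (localize 0 R φ - φ) ≤ C / R := by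
  obtain ⟨B, hB0, hB⟩ := exists_scaledBoundAt_localize E n
  obtain ⟨S, hS⟩ := exists_forall_pow_mul_norm_iteratedFDeriv_le φ (k + 1) n
  have hS0 : 0 ≤ S := le_trans (by positivity) (hS 0 n.zero_le 0)
  refine ⟨2 * (B + 1) * S, fun R hR => ?_⟩
  have hR0 : 0 < R := one_pos.trans_le hR
  refine SchwartzMap.seminorm_le_bound ℝ k n _ (by positivity) fun x => ?_
  rcases lt_or_ge ‖x‖ (R / 2) with hx | hx
  · have hzero : ⇑(localize 0 R φ - φ) =ᶠ[𝓝 x] 0 := by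
      filter_upwards [localize_eventuallyEq_of_norm_lt 0 φ hR0 (by simpa using hx)] with y hy
      simp [hy]
    rw [(hzero.iteratedFDeriv ℝ n).eq_of_nhds, iteratedFDeriv_zero]
    simp only [Pi.zero_apply, norm_zero, mul_zero]
    positivity
  · have hx0 : 0 < ‖x‖ := by linarith
    have hφ : ScaledBoundAt n 1 (S / ‖x‖ ^ (k + 1)) φ x := fun j hj => by
      rw [one_pow, one_mul, le_div_iff₀' (by positivity)]
      exact hS j hj x
    have hsub : iteratedFDeriv ℝ n (localize 0 R φ - φ) x =
        iteratedFDeriv ℝ n (localize 0 R φ) x - iteratedFDeriv ℝ n φ x :=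
      iteratedFDeriv_sub_apply ((localize 0 R φ).smooth n).contDiffAt (φ.smooth n).contDiffAt
    calc ‖x‖ ^ k * ‖iteratedFDeriv ℝ n (localize 0 R φ - φ) x‖
        ≤ ‖x‖ ^ k * (B * (S / ‖x‖ ^ (k + 1)) + S / ‖x‖ ^ (k + 1)) := by
          rw [hsub]
          grw [norm_sub_le, (hB zero_le_one hR hR0 hφ).norm_le le_rfl, hφ.norm_le le_rfl]
      _ = (B + 1) * S / ‖x‖ := by
          field_simp
          ring
      _ ≤ (B + 1) * S / (R / 2) := by gcongr
      _ = 2 * (B + 1) * S / R := by field_simp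

lemma tendsto_localize_atTop (φ : 𝓢(E, ℂ)) :
    Tendsto (fun R : ℝ => localize 0 R φ) atTop (𝓝 φ) := by
  rw [(schwartz_withSeminorms ℝ E ℂ).tendsto_nhds]
  rintro ⟨k, n⟩ η hη
  obtain ⟨C, hC⟩ := exists_seminorm_localize_sub_le φ k n
  have hlim : Tendsto (fun R : ℝ => C / R) atTop (𝓝 0) := tendsto_const_nhds.div_atTop tendsto_id
  filter_upwards [hlim.eventually_lt_const hη, eventually_ge_atTop 1] with R hR hR1
  exact (hC R hR1).trans_lt hR

end Cutoff

section DyadicSum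

lemma exists_le_two_pow_inv_max_pow_le (s : ℝ) (N : ℕ) :
    ∃ j : ℕ, s ≤ 2 ^ j ∧ ((max 1 s) ^ N)⁻¹ ≤ (2 / 2 ^ j) ^ N := by
  obtain ⟨j, hjs, hsj⟩ := exists_nat_pow_near (le_max_left 1 s) one_lt_two
  refine ⟨j + 1, (le_max_right 1 s).trans hsj.le, ?_⟩
  rw [pow_succ', div_mul_cancel_left₀ two_ne_zero, inv_pow]
  gcongr

lemma ofReal_inv_max_pow_le_tsum (s : ℝ) (N : ℕ) :
    ENNReal.ofReal ((max 1 s) ^ N)⁻¹ ≤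
      ∑' j : ℕ, if s ≤ 2 ^ j then ENNReal.ofReal ((2 / 2 ^ j) ^ N) else 0 := by
  obtain ⟨j, hsj, hj⟩ := exists_le_two_pow_inv_max_pow_le s N
  refine le_trans ?_ (ENNReal.le_tsum j)
  rw [if_pos hsj]
  exact ENNReal.ofReal_le_ofReal hj

lemma tsum_ofReal_two_pow_eq {C ε : ℝ} (hC : 0 ≤ C) (hε : 0 < ε) (n : ℕ) :
    ∑' j : ℕ, ENNReal.ofReal ((2 / 2 ^ j) ^ (n + 1) * (C * (2 ^ j / ε) ^ n)) =
      ENNReal.ofReal (2 ^ (n + 2) * C / ε ^ n) := by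
  have hterm (j : ℕ) : (2 / 2 ^ j) ^ (n + 1) * (C * (2 ^ j / ε) ^ n) =
      2 ^ (n + 1) * C / ε ^ n * (1 / 2) ^ j := by
    rw [div_pow, div_pow, one_div_pow, pow_succ (2 ^ j : ℝ)]
    field_simp
  simp only [hterm]
  rw [← ENNReal.ofReal_tsum_of_nonneg (fun j => by positivity)
    (summable_geometric_two.mul_left _), tsum_mul_left, tsum_geometric_two]
  congr 1
  ring

lemma tsum_mul_ofReal_inv_max_pow_le {ι : Type*} {ρ : ι → ℝ} {P : ι → ℝ≥0∞} {C r₀ ε : ℝ} {n : ℕ}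
    (hC : 0 ≤ C)
    (hP : ∀ r ≥ r₀, (∑' x, if ρ x ≤ r then P x else 0) ≤ ENNReal.ofReal (C * r ^ n))
    (hε : 0 < ε) (hεr : ε * r₀ ≤ 1) :
    ∑' x, P x * ENNReal.ofReal ((max 1 (ε * ρ x)) ^ (n + 1))⁻¹ ≤
      ENNReal.ofReal (2 ^ (n + 2) * C / ε ^ n) := by
  calc ∑' x, P x * ENNReal.ofReal ((max 1 (ε * ρ x)) ^ (n + 1))⁻¹
      ≤ ∑' x, P x * ∑' j : ℕ,
          if ε * ρ x ≤ 2 ^ j then ENNReal.ofReal ((2 / 2 ^ j) ^ (n + 1)) else 0 := by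
        gcongr with x
        exact ofReal_inv_max_pow_le_tsum _ _
    _ = ∑' (x) (j : ℕ), ENNReal.ofReal ((2 / 2 ^ j) ^ (n + 1)) *
          if ρ x ≤ 2 ^ j / ε then P x else 0 := by
        simp only [le_div_iff₀' hε, mul_ite, ite_mul, mul_zero, zero_mul, mul_comm (P _),
          ← ENNReal.tsum_mul_right]
    _ = ∑' j : ℕ, ENNReal.ofReal ((2 / 2 ^ j) ^ (n + 1)) *
          ∑' x, if ρ x ≤ 2 ^ j / ε then P x else 0 := by
        rw [ENNReal.tsum_comm]
        simp only [ENNReal.tsum_mul_left]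
    _ ≤ ∑' j : ℕ, ENNReal.ofReal ((2 / 2 ^ j) ^ (n + 1) * (C * (2 ^ j / ε) ^ n)) := by
        refine ENNReal.tsum_le_tsum fun j => ?_
        have hr : r₀ ≤ 2 ^ j / ε := by
          rw [le_div_iff₀' hε]
          exact hεr.trans (one_le_pow₀ one_le_two)
        rw [ENNReal.ofReal_mul (by positivity)]
        gcongr
        exact hP _ hr
    _ = ENNReal.ofReal (2 ^ (n + 2) * C / ε ^ n) := tsum_ofReal_two_pow_eq hC hε n

end DyadicSum

section MultiIndex

open Finset
open scoped ContDiff Topology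

variable {d : ℕ}

/-- The iterated partial derivative along a word in the coordinate directions, its last letter being
applied first. -/
def iteratedPartial (l : List (Fin d)) (φ : Rd d → ℂ) : Rd d → ℂ := l.foldr pderiv' φ

/-- The nondecreasing word in which the letter `i` occurs `k i` times. -/
def multiIndexWord (k : Fin d → ℕ) : List (Fin d) :=
  (List.finRange d).flatMap fun i => List.replicate (k i) i

lemma length_multiIndexWord (k : Fin d → ℕ) : (multiIndexWord k).length = ∑ i, k i := by
  simp [multiIndexWord, List.length_flatMap, Fin.sum_univ_def]

lemma count_multiIndexWord (k : Fin d → ℕ) (i : Fin d) : (multiIndexWord k).count i = k i := by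
  simp [multiIndexWord, List.count_flatMap, ← Fin.sum_univ_def, Function.comp_def,
    List.count_replicate]

lemma iteratedPartial_replicate (n : ℕ) (i : Fin d) (φ : Rd d → ℂ) :
    iteratedPartial (List.replicate n i) φ = (pderiv' i)^[n] φ := by
  induction n with
  | zero => rfl
  | succ n ih => rw [Function.iterate_succ_apply', ← ih]; rfl

lemma Dmulti_eq_iteratedPartial (k : Fin d → ℕ) (φ : Rd d → ℂ) :
    Dmulti k φ = iteratedPartial (multiIndexWord k) φ := by
  unfold Dmulti multiIndexWord
  induction List.finRange d with
  | nil => rfl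
  | cons i l ih =>
    rw [List.flatMap_cons, iteratedPartial, List.foldr_append]
    exact (congrArg _ ih).trans (iteratedPartial_replicate (k i) i _).symm

section Smooth

variable {φ : Rd d → ℂ}

lemma contDiff_pderiv' (i : Fin d) (hφ : ContDiff ℝ ∞ φ) : ContDiff ℝ ∞ (pderiv' i φ) :=
  (hφ.fderiv_right (m := ∞) (by simp)).clm_apply contDiff_const

lemma contDiff_iteratedPartial (l : List (Fin d)) (hφ : ContDiff ℝ ∞ φ) :
    ContDiff ℝ ∞ (iteratedPartial l φ) := by
  induction l with
  | nil => exact hφ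
  | cons i l ih => exact contDiff_pderiv' i ih

lemma pderiv'_comm (i j : Fin d) (hφ : ContDiff ℝ ∞ φ) :
    pderiv' i (pderiv' j φ) = pderiv' j (pderiv' i φ) := by
  have hsecond (i j : Fin d) (x : Rd d) : pderiv' i (pderiv' j φ) x =
      fderiv ℝ (fderiv ℝ φ) x (EuclideanSpace.single i 1) (EuclideanSpace.single j 1) := by
    have hdiff : DifferentiableAt ℝ (fderiv ℝ φ) x :=
      (hφ.fderiv_right (m := ∞) (by simp)).differentiable (by simp) x
    unfold pderiv'
    simp [fderiv_clm_apply hdiff (differentiableAt_const _)]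
  ext x
  rw [hsecond, hsecond]
  have hsymm : minSmoothness ℝ 2 ≤ (∞ : ℕ∞ω) := by
    rw [minSmoothness_of_isRCLikeNormedField]
    exact WithTop.coe_le_coe.2 le_top
  exact hφ.contDiffAt.isSymmSndFDerivAt hsymm _ _

lemma iteratedPartial_perm {l l' : List (Fin d)} (hl : l.Perm l') (hφ : ContDiff ℝ ∞ φ) :
    iteratedPartial l φ = iteratedPartial l' φ := by
  induction hl with
  | nil => rfl
  | cons i _ ih => exact congrArg (pderiv' i) ih
  | swap i j l => exact pderiv'_comm _ _ (contDiff_iteratedPartial l hφ)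
  | trans _ _ ih₁ ih₂ => exact ih₁.trans ih₂

lemma iteratedPartial_eq_iteratedFDeriv (l : List (Fin d)) (hφ : ContDiff ℝ ∞ φ) (x : Rd d) :
    iteratedPartial l φ x =
      iteratedFDeriv ℝ l.length φ x (fun a => EuclideanSpace.single (l.get a) 1) := by
  induction l generalizing x with
  | nil => simp [iteratedPartial]
  | cons i l ih =>
    have hdiff : DifferentiableAt ℝ (iteratedFDeriv ℝ l.length φ) x :=
      hφ.differentiable_iteratedFDeriv (WithTop.coe_lt_coe.2 (ENat.natCast_lt_top _)) x
    calc iteratedPartial (i :: l) φ x = pderiv' i (iteratedPartial l φ) x := rfl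
      _ = _ := by
        rw [funext ih, pderiv', fderiv_continuousMultilinear_apply_const_apply hdiff]
        rfl

lemma norm_Dmulti_le (k : Fin d → ℕ) (hφ : ContDiff ℝ ∞ φ) (x : Rd d) :
    ‖Dmulti k φ x‖ ≤ ‖iteratedFDeriv ℝ (∑ i, k i) φ x‖ := by
  rw [Dmulti_eq_iteratedPartial, iteratedPartial_eq_iteratedFDeriv _ hφ, ← length_multiIndexWord]
  refine (ContinuousMultilinearMap.le_opNorm _ _).trans ?_
  simp

lemma Dmulti_eq_zero_of_notMem_tsupport (k : Fin d → ℕ) (hφ : ContDiff ℝ ∞ φ) {x : Rd d}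
    (hx : x ∉ tsupport φ) : Dmulti k φ x = 0 := by
  have hbound : ScaledBoundAt (∑ i, k i) 1 0 φ x := .of_notMem_tsupport le_rfl hx
  exact norm_le_zero_iff.1 ((norm_Dmulti_le k hφ x).trans (hbound.norm_le le_rfl))

lemma iteratedFDeriv_eq_zero_of_Dmulti_eq_zero (hφ : ContDiff ℝ ∞ φ) {x : Rd d} {j : ℕ}
    (h : ∀ k : Fin d → ℕ, ∑ i, k i = j → Dmulti k φ x = 0) : iteratedFDeriv ℝ j φ x = 0 := by
  apply ContinuousMultilinearMap.toMultilinearMap_injective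
  refine Module.Basis.ext_multilinear (fun _ => (EuclideanSpace.basisFun (Fin d) ℝ).toBasis) ?_
  intro w
  obtain ⟨l, rfl, hl⟩ :
      ∃ l : List (Fin d), ∃ h : l.length = j, w = fun a => l.get (a.cast h.symm) :=
    ⟨List.ofFn w, List.length_ofFn, by ext; simp⟩
  have hword : l.Perm (multiIndexWord fun i => l.count i) :=
    List.perm_iff_count.2 fun i => (count_multiIndexWord (fun i => l.count i) i).symm
  have hzero : iteratedPartial l φ x = 0 := by
    rw [iteratedPartial_perm hword hφ, ← Dmulti_eq_iteratedPartial]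
    apply h
    rw [← length_multiIndexWord, hword.length_eq]
  rw [iteratedPartial_eq_iteratedFDeriv l hφ] at hzero
  simpa [hl] using hzero

end Smooth

lemma iteratedPartial_congr (l : List (Fin d)) {φ ψ : Rd d → ℂ} {x : Rd d} (h : φ =ᶠ[𝓝 x] ψ) :
    iteratedPartial l φ =ᶠ[𝓝 x] iteratedPartial l ψ := by
  induction l with
  | nil => exact h
  | cons i l ih => exact ih.fderiv.fun_comp fun D => D (EuclideanSpace.single i 1)

lemma iteratedPartial_comp_sub (l : List (Fin d)) (φ : Rd d → ℂ) (γ : Rd d) :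
    iteratedPartial l (fun y => φ (y - γ)) = fun y => iteratedPartial l φ (y - γ) := by
  induction l with
  | nil => rfl
  | cons i l ih =>
    ext y
    change pderiv' i (iteratedPartial l fun y => φ (y - γ)) y = pderiv' i (iteratedPartial l φ) _
    rw [ih, pderiv', pderiv', fderiv_comp_sub]

lemma Dmulti_eq_iteratedLineDerivOp (k : Fin d → ℕ) (φ : 𝓢(Rd d, ℂ)) (x : Rd d) :
    Dmulti k φ x = LineDeriv.iteratedLineDerivOp
      (fun a => EuclideanSpace.single ((multiIndexWord k).get a) (1 : ℝ)) φ x := by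
  rw [SchwartzMap.iteratedLineDerivOp_eq_iteratedFDeriv, Dmulti_eq_iteratedPartial,
    iteratedPartial_eq_iteratedFDeriv _ (φ.smooth _)]

/-- The functional `φ ↦ (D^k φ)(x)` on test functions. -/
def DmultiAt (k : Fin d → ℕ) (x : Rd d) : 𝓢(Rd d, ℂ) →ₗ[ℂ] ℂ where
  toFun φ := Dmulti k φ x
  map_add' φ ψ := by
    simp only [Dmulti_eq_iteratedLineDerivOp, LineDeriv.iteratedLineDerivOp_add]
    rfl
  map_smul' c φ := by
    simp only [Dmulti_eq_iteratedLineDerivOp, LineDeriv.iteratedLineDerivOp_smul]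
    rfl

end MultiIndex

section JetBump

open Finset
open scoped ContDiff Topology

/-- The divided power `t^m / m!`, normalized so that differentiation lowers `m` by one. -/
def dividedPow (m : ℕ) (t : ℝ) : ℂ := t ^ m / m.factorial

lemma contDiff_dividedPow (m : ℕ) : ContDiff ℝ ∞ (dividedPow m) :=
  (Complex.ofRealCLM.contDiff.pow m).div_const _

lemma deriv_dividedPow_zero : deriv (dividedPow 0) = 0 := by
  have hconst : dividedPow 0 = fun _ => 1 := by
    ext t
    simp [dividedPow]
  rw [hconst, deriv_const']
  rfl

lemma deriv_dividedPow_succ (m : ℕ) : deriv (dividedPow (m + 1)) = dividedPow m := by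
  ext t
  have hpow := (Complex.ofRealCLM.hasDerivAt (x := t)).pow (m + 1)
  refine (hpow.div_const ((m + 1).factorial : ℂ)).deriv.trans ?_
  have hm : (m.factorial : ℂ) ≠ 0 := mod_cast m.factorial_ne_zero
  have hm' : (m : ℂ) + 1 ≠ 0 := mod_cast m.succ_ne_zero
  simp only [dividedPow, Nat.factorial_succ, Complex.ofRealCLM_apply, Complex.ofReal_one]
  push_cast
  field_simp

lemma iterate_deriv_dividedPow_zero (n m : ℕ) :
    deriv^[n] (dividedPow m) 0 = if n = m then 1 else 0 := by
  induction n generalizing m with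
  | zero => cases m <;> simp [dividedPow]
  | succ n ih =>
    rw [Function.iterate_succ_apply]
    cases m with
    | zero =>
      have hzero : deriv (0 : ℝ → ℂ) = 0 := by ext t; simp
      simp [deriv_dividedPow_zero, Function.iterate_fixed hzero]
    | succ m => simp [deriv_dividedPow_succ, ih]

variable {d : ℕ}

/-- The product `x ↦ ∏ j, u j (x j)` of functions of the single coordinates. -/
def coordProd (u : Fin d → ℝ → ℂ) (x : Rd d) : ℂ := ∏ j, u j (x j)

lemma contDiff_coordProd {u : Fin d → ℝ → ℂ} (hu : ∀ j, ContDiff ℝ ∞ (u j)) :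
    ContDiff ℝ ∞ (coordProd u) :=
  contDiff_prod fun j _ => (hu j).comp (EuclideanSpace.proj j : Rd d →L[ℝ] ℝ).contDiff

lemma pderiv'_coordProd (i : Fin d) {u : Fin d → ℝ → ℂ} (hu : ∀ j, ContDiff ℝ ∞ (u j)) :
    pderiv' i (coordProd u) = coordProd (Function.update u i (deriv (u i))) := by
  ext x
  have hfactor (j : Fin d) : HasFDerivAt (fun x : Rd d => u j (x j))
      ((ContinuousLinearMap.toSpanSingleton ℝ (deriv (u j) (x j))).comp
        (EuclideanSpace.proj j : Rd d →L[ℝ] ℝ)) x :=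
    ((hu j).differentiable (by simp) (x j)).hasDerivAt.hasFDerivAt.comp x
      (EuclideanSpace.proj j : Rd d →L[ℝ] ℝ).hasFDerivAt
  have hrest : ∏ j ∈ univ.erase i, Function.update u i (deriv (u i)) j (x j) =
      ∏ j ∈ univ.erase i, u j (x j) :=
    prod_congr rfl fun j hj => by rw [Function.update_of_ne (ne_of_mem_erase hj)]
  calc pderiv' i (coordProd u) x
      = ∑ j, (∏ l ∈ univ.erase j, u l (x l)) * (if i = j then deriv (u j) (x j) else 0) := by
        unfold pderiv' coordProd
        rw [(HasFDerivAt.finsetProd fun j _ => hfactor j).fderiv]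
        simp [eq_comm]
    _ = (∏ j ∈ univ.erase i, u j (x j)) * deriv (u i) (x i) := by simp
    _ = coordProd (Function.update u i (deriv (u i))) x := by
        rw [coordProd, ← prod_erase_mul univ _ (mem_univ i), hrest, Function.update_self]

lemma iteratedPartial_coordProd (l : List (Fin d)) {u : Fin d → ℝ → ℂ}
    (hu : ∀ j, ContDiff ℝ ∞ (u j)) :
    iteratedPartial l (coordProd u) = coordProd fun j => deriv^[l.count j] (u j) := by
  induction l with
  | nil => rfl
  | cons i l ih =>
    change pderiv' i (iteratedPartial l (coordProd u)) = _
    rw [ih, pderiv'_coordProd i fun j => (hu j).iterate_deriv _]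
    congr 1
    ext j : 1
    rcases eq_or_ne j i with rfl | hj
    · simp [Function.iterate_succ_apply']
    · rw [Function.update_of_ne hj, List.count_cons_of_ne hj.symm]

lemma Dmulti_coordProd_dividedPow_zero (k m : Fin d → ℕ) :
    Dmulti k (coordProd fun i => dividedPow (m i)) 0 = if k = m then 1 else 0 := by
  rw [Dmulti_eq_iteratedPartial, iteratedPartial_coordProd _ fun i => contDiff_dividedPow (m i)]
  simp only [coordProd, count_multiIndexWord, PiLp.zero_apply, iterate_deriv_dividedPow_zero,
    prod_ite_zero, prod_const_one, funext_iff, Finset.mem_univ, forall_true_left]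

/-- A test function supported in the unit ball about `γ` which coincides near `γ` with the monomial
`(y - γ)^m / m!`; its jet at `γ` is dual to the derivatives `D^k`. -/
def jetBump (m : Fin d → ℕ) (γ : Rd d) : 𝓢(Rd d, ℂ) :=
  SchwartzMap.compSubConstCLM ℂ γ
    (((hasCompactSupport_cutoff (0 : Rd d) one_pos).mul_right
      (f' := coordProd fun i => dividedPow (m i))).toSchwartzMap
      ((contDiff_cutoff 0 1).mul (contDiff_coordProd fun i => contDiff_dividedPow (m i))))

lemma Dmulti_jetBump (k m : Fin d → ℕ) (γ : Rd d) :
    Dmulti k (jetBump m γ) γ = if k = m then 1 else 0 := by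
  set P : Rd d → ℂ := coordProd fun i => dividedPow (m i)
  have hnear : cutoff (0 : Rd d) 1 * P =ᶠ[𝓝 0] P := by
    filter_upwards [closedBall_mem_nhds (0 : Rd d) one_half_pos] with x hx
    rw [Pi.mul_apply, cutoff_eq_one one_pos (by simpa using hx), one_mul]
  calc Dmulti k (jetBump m γ) γ
      = iteratedPartial (multiIndexWord k)
          (fun y => (cutoff (0 : Rd d) 1 * P) (y - γ)) γ := by
        rw [Dmulti_eq_iteratedPartial]
        rfl
    _ = Dmulti k P 0 := by
        rw [iteratedPartial_comp_sub, Dmulti_eq_iteratedPartial]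
        simp only [sub_self, (iteratedPartial_congr _ hnear).eq_of_nhds]
    _ = if k = m then 1 else 0 := Dmulti_coordProd_dividedPow_zero k m

lemma exists_forall_scaledBoundAt_jetBump (m : Fin d → ℕ) (N : ℕ) :
    ∃ A : ℝ, ∀ γ y, ScaledBoundAt N 1 A (jetBump m γ) y := by
  obtain ⟨A, hA⟩ := exists_forall_scaledBoundAt (jetBump m 0) N
  refine ⟨A, fun γ y j hj => ?_⟩
  have hshift : (jetBump m γ : Rd d → ℂ) = fun z => jetBump m 0 (z - γ) := by
    ext z
    simp [jetBump]
  rw [hshift, iteratedFDeriv_comp_sub]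
  exact hA (y - γ) j hj

end JetBump

section SeriesBound

open Finset Filter
open scoped Topology

variable {d : ℕ}

lemma norm_dkDelta_le {k : Fin d → ℕ} {K : ℕ} (hk : k ∈ mIdx d K) {A : ℝ} {x : Rd d}
    {φ : 𝓢(Rd d, ℂ)} (h : ScaledBoundAt K 1 A φ x) : ‖dkDelta k x φ‖ ≤ A := by
  rw [dkDelta, norm_mul, norm_pow, norm_neg, norm_one, one_pow, one_mul]
  exact (norm_Dmulti_le k (φ.smooth _) x).trans (h.norm_le (mem_filter.1 hk).2)

variable {f : TemperedDist d} {K n : ℕ} {p : (Fin d → ℕ) → Rd d → ℂ} {C r₀ ε A : ℝ}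
  {ψ : 𝓢(Rd d, ℂ)}

lemma norm_le_of_hasCompactSupport
    (hrep : ∀ φ : 𝓢(Rd d, ℂ), HasCompactSupport φ →
      f φ = ∑' x, ∑ k ∈ mIdx d K, p k x * dkDelta k x φ) (hC : 0 ≤ C)
    (hP : ∀ r ≥ r₀, (∑' x, if ‖x‖ ≤ r then ∑ k ∈ mIdx d K, (‖p k x‖₊ : ℝ≥0∞) else 0) ≤
      ENNReal.ofReal (C * r ^ n)) (hε : 0 < ε) (hεr : ε * r₀ ≤ 1) (hψ : HasCompactSupport ψ)
    (hbound : ∀ x, ScaledBoundAt K 1 (A * ((max 1 (ε * ‖x‖)) ^ (n + 1))⁻¹) ψ x) :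
    ‖f ψ‖ ≤ A * (2 ^ (n + 2) * C / ε ^ n) := by
  have hA : 0 ≤ A := by simpa using (hbound 0).nonneg
  rw [← ENNReal.ofReal_le_ofReal_iff (by positivity), ofReal_norm, hrep ψ hψ]
  calc ‖∑' x, ∑ k ∈ mIdx d K, p k x * dkDelta k x ψ‖ₑ
      ≤ ∑' x, ∑ k ∈ mIdx d K, ‖p k x * dkDelta k x ψ‖ₑ :=
        enorm_tsum_le_tsum_enorm.trans (ENNReal.tsum_le_tsum fun _ => enorm_sum_le _ _)
    _ ≤ ∑' x, ∑ k ∈ mIdx d K,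
          ‖p k x‖ₑ * ENNReal.ofReal (A * ((max 1 (ε * ‖x‖)) ^ (n + 1))⁻¹) := by
        refine ENNReal.tsum_le_tsum fun x => Finset.sum_le_sum fun k hk => ?_
        rw [enorm_mul, ← ofReal_norm (dkDelta k x ψ)]
        gcongr
        exact norm_dkDelta_le hk (hbound x)
    _ = ENNReal.ofReal A * ∑' x, (∑ k ∈ mIdx d K, ‖p k x‖ₑ) *
          ENNReal.ofReal ((max 1 (ε * ‖x‖)) ^ (n + 1))⁻¹ := by
        simp only [← ENNReal.tsum_mul_left, Finset.sum_mul, ENNReal.ofReal_mul hA, Finset.mul_sum,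
          mul_left_comm]
    _ ≤ ENNReal.ofReal (A * (2 ^ (n + 2) * C / ε ^ n)) := by
        rw [ENNReal.ofReal_mul hA]
        gcongr
        exact tsum_mul_ofReal_inv_max_pow_le hC hP hε hεr

lemma exists_norm_mul_pow_le_of_scaledBoundAt
    (hrep : ∀ φ : 𝓢(Rd d, ℂ), HasCompactSupport φ →
      f φ = ∑' x, ∑ k ∈ mIdx d K, p k x * dkDelta k x φ) (hC : 0 ≤ C)
    (hP : ∀ r ≥ r₀, (∑' x, if ‖x‖ ≤ r then ∑ k ∈ mIdx d K, (‖p k x‖₊ : ℝ≥0∞) else 0) ≤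
      ENNReal.ofReal (C * r ^ n)) :
    ∃ C' ≥ 0, ∀ {ε A : ℝ} {ψ : 𝓢(Rd d, ℂ)}, 0 < ε → ε * r₀ ≤ 1 →
      (∀ x, ScaledBoundAt K 1 (A * ((max 1 (ε * ‖x‖)) ^ (n + 1))⁻¹) ψ x) →
      ‖f ψ‖ * ε ^ n ≤ C' * A := by
  obtain ⟨B, hB0, hB⟩ := exists_scaledBoundAt_localize (Rd d) K
  refine ⟨B * (2 ^ (n + 2) * C), by positivity, fun {ε A ψ} hε hεr hψ => ?_⟩
  have hlocal : ∀ᶠ R : ℝ in atTop, ‖f (localize 0 R ψ)‖ ≤ B * A * (2 ^ (n + 2) * C / ε ^ n) := by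
    filter_upwards [eventually_ge_atTop 1] with R hR
    have hR0 : 0 < R := one_pos.trans_le hR
    refine norm_le_of_hasCompactSupport hrep hC hP hε hεr (hasCompactSupport_localize 0 ψ hR0) ?_
    intro x
    rw [mul_assoc]
    exact hB zero_le_one hR hR0 (hψ x)
  have hlim := ((f.continuous.tendsto ψ).comp (tendsto_localize_atTop ψ)).norm
  calc ‖f ψ‖ * ε ^ n ≤ B * A * (2 ^ (n + 2) * C / ε ^ n) * ε ^ n := by
        gcongr
        exact le_of_tendsto hlim hlocal
    _ = B * (2 ^ (n + 2) * C) * A := by field_simp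

end SeriesBound

section FourierBound

open Finset
open scoped FourierTransform ContDiff

variable {V : Type*} [NormedAddCommGroup V] [InnerProductSpace ℝ V] [FiniteDimensional ℝ V]
  [MeasurableSpace V] [BorelSpace V]

lemma integral_pow_mul_norm_iteratedFDeriv_le {g : 𝓢(V, ℂ)} {γ : V} {N K : ℕ} {ε A : ℝ}
    (hε : 0 ≤ ε) (hε1 : ε ≤ 1) (hg : tsupport g ⊆ closedBall γ ε)
    (hA : ∀ y, ScaledBoundAt N ε A g y) {a b : ℕ} (ha : a ≤ K) (hb : b ≤ N) :
    ε ^ b * ∫ v, ‖v‖ ^ a * ‖iteratedFDeriv ℝ b g v‖ ≤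
      A * (1 + ‖γ‖) ^ K * (ε ^ Module.finrank ℝ V * volume.real (ball (0 : V) 1)) := by
  have hA0 : 0 ≤ A := (hA 0).nonneg
  have hball : ∀ v ∈ closedBall γ ε,
      ‖ε ^ b * (‖v‖ ^ a * ‖iteratedFDeriv ℝ b g v‖)‖ ≤ A * (1 + ‖γ‖) ^ K := by
    intro v hv
    have hv1 : ‖v‖ ≤ 1 + ‖γ‖ := by
      linarith [norm_sub_norm_le v γ, mem_closedBall_iff_norm.1 hv]
    rw [Real.norm_of_nonneg (by positivity)]
    calc ε ^ b * (‖v‖ ^ a * ‖iteratedFDeriv ℝ b g v‖)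
        = ε ^ b * ‖iteratedFDeriv ℝ b g v‖ * ‖v‖ ^ a := by ring
      _ ≤ A * (1 + ‖γ‖) ^ a := by
          gcongr
          exact hA v b hb
      _ ≤ A * (1 + ‖γ‖) ^ K := by
          gcongr
          exact le_add_of_nonneg_right (norm_nonneg γ)
  have hvanish : ∀ v ∉ closedBall γ ε, ε ^ b * (‖v‖ ^ a * ‖iteratedFDeriv ℝ b g v‖) = 0 := by
    intro v hv
    have hzero : iteratedFDeriv ℝ b g v = 0 := by
      by_contra hne
      exact hv (hg (support_iteratedFDeriv_subset b hne))
    rw [hzero, norm_zero, mul_zero, mul_zero]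
  have hvol : volume.real (closedBall γ ε) =
      ε ^ Module.finrank ℝ V * volume.real (ball (0 : V) 1) := by
    rw [measureReal_def, Measure.addHaar_closedBall _ _ hε, ENNReal.toReal_mul,
      ENNReal.toReal_ofReal (by positivity), ← measureReal_def]
  rw [← integral_const_mul, ← setIntegral_eq_integral_of_forall_compl_eq_zero hvanish, ← hvol]
  exact (Real.le_norm_self _).trans
    (norm_setIntegral_le_of_norm_le_const measure_closedBall_lt_top hball)

lemma pow_mul_norm_iteratedFDeriv_fourier_le {g : 𝓢(V, ℂ)} {N K : ℕ} {ε I : ℝ}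
    (hε : 0 ≤ ε) (hε1 : ε ≤ 1)
    (hI : ∀ a ≤ K, ∀ b ≤ N, ε ^ b * ∫ v, ‖v‖ ^ a * ‖iteratedFDeriv ℝ b g v‖ ≤ I)
    {k l : ℕ} (hk : k ≤ K) (hl : l ≤ N) (x : V) :
    (ε * ‖x‖) ^ l * ‖iteratedFDeriv ℝ k (𝓕 (g : V → ℂ)) x‖ ≤
      (2 * Real.pi) ^ K * (2 * K + 2) ^ N * ((K + 1) * (N + 1) * I) := by
  have hI0 : 0 ≤ I := le_trans (by positivity) (hI 0 K.zero_le 0 N.zero_le)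
  have hmoment : ∀ q ∈ range (k + 1) ×ˢ range (l + 1),
      ε ^ l * ∫ v, ‖v‖ ^ q.1 * ‖iteratedFDeriv ℝ q.2 g v‖ ≤ I := by
    intro q hq
    rw [mem_product, mem_range_succ_iff, mem_range_succ_iff] at hq
    refine le_trans ?_ (hI q.1 (hq.1.trans hk) q.2 (hq.2.trans hl))
    exact mul_le_mul_of_nonneg_right (pow_le_pow_of_le_one hε hε1 hq.2) (by positivity)
  have hpi : 1 ≤ 2 * Real.pi := by linarith [Real.pi_gt_three]
  calc (ε * ‖x‖) ^ l * ‖iteratedFDeriv ℝ k (𝓕 (g : V → ℂ)) x‖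
      = ε ^ l * (‖x‖ ^ l * ‖iteratedFDeriv ℝ k (𝓕 (g : V → ℂ)) x‖) := by
        rw [mul_pow, mul_assoc]
    _ ≤ ε ^ l * ((2 * Real.pi) ^ k * (2 * k + 2) ^ l *
          ∑ q ∈ range (k + 1) ×ˢ range (l + 1), ∫ v, ‖v‖ ^ q.1 * ‖iteratedFDeriv ℝ q.2 g v‖) := by
        refine mul_le_mul_of_nonneg_left ?_ (by positivity)
        exact Real.pow_mul_norm_iteratedFDeriv_fourier_le (K := ⊤) (N := ⊤) (g.smooth ⊤)
          (fun k n _ _ => integrable_pow_mul_iteratedFDeriv _ g k n) le_top le_top x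
    _ = (2 * Real.pi) ^ k * (2 * k + 2) ^ l * ∑ q ∈ range (k + 1) ×ˢ range (l + 1),
          ε ^ l * ∫ v, ‖v‖ ^ q.1 * ‖iteratedFDeriv ℝ q.2 g v‖ := by
        rw [← Finset.mul_sum]
        ring
    _ ≤ (2 * Real.pi) ^ k * (2 * k + 2) ^ l * ((k + 1) * (l + 1) * I) := by
        gcongr
        refine (Finset.sum_le_card_nsmul _ _ _ hmoment).trans_eq ?_
        simp
    _ ≤ (2 * Real.pi) ^ K * (2 * K + 2) ^ N * ((K + 1) * (N + 1) * I) := by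
        have hpow : (2 * k + 2 : ℝ) ^ l ≤ (2 * K + 2) ^ N := by
          have hK : 1 ≤ 2 * (K : ℝ) + 2 := by linarith [K.cast_nonneg (α := ℝ)]
          calc (2 * k + 2 : ℝ) ^ l ≤ (2 * K + 2) ^ l := by gcongr
            _ ≤ (2 * K + 2) ^ N := pow_le_pow_right₀ hK hl
        gcongr

variable (V) in
lemma exists_scaledBoundAt_fourier (N K : ℕ) :
    ∃ D ≥ 0, ∀ {ε A : ℝ} {γ : V} {g : 𝓢(V, ℂ)}, 0 ≤ ε → ε ≤ 1 → tsupport g ⊆ closedBall γ ε →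
      (∀ y, ScaledBoundAt N ε A g y) → ∀ x,
      ScaledBoundAt K 1 (D * A * (1 + ‖γ‖) ^ K * ε ^ Module.finrank ℝ V *
        ((max 1 (ε * ‖x‖)) ^ N)⁻¹) (𝓕 (g : V → ℂ)) x := by
  refine ⟨(2 * Real.pi) ^ K * (2 * K + 2) ^ N * ((K + 1) * (N + 1) * volume.real (ball (0 : V) 1)),
    by positivity, fun {ε A γ g} hε hε1 hg hA x k hk => ?_⟩
  have hbound {l : ℕ} (hl : l ≤ N) := pow_mul_norm_iteratedFDeriv_fourier_le hε hε1
    (fun a ha b hb => integral_pow_mul_norm_iteratedFDeriv_le hε hε1 hg hA ha hb) hk hl x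
  rw [one_pow, one_mul, ← div_eq_mul_inv, le_div_iff₀' (by positivity)]
  rcases max_choice 1 (ε * ‖x‖) with h | h
  · rw [h, one_pow, one_mul]
    simpa only [pow_zero, one_mul] using (hbound N.zero_le).trans_eq (by ring)
  · rw [h]
    exact (hbound le_rfl).trans_eq (by ring)

end FourierBound

section ScalingBound

variable {d : ℕ}

/-- The values of `T` on test functions supported in a small ball of radius `ε`, whose derivatives
of order at most `N` are bounded once lengths are measured in units of `ε`, are of size
`A ε^{-M}`, with polynomial growth of degree `K` in the centre `γ` of the ball. The constants are
uniform in the radius and in the centre. -/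
def HasScalingBound (T : TemperedDist d) (N M K : ℕ) : Prop :=
  ∃ C ≥ 0, ∃ ε₀ ∈ Ioc (0 : ℝ) 1, ∀ {ε A : ℝ} {γ : Rd d} {g : 𝓢(Rd d, ℂ)}, ε ∈ Ioc 0 ε₀ →
    tsupport g ⊆ closedBall γ ε → (∀ y, ScaledBoundAt N ε A g y) →
    ‖T g‖ * ε ^ M ≤ C * A * (1 + ‖γ‖) ^ K

lemma hasScalingBound_fourierTD {f : TemperedDist d} {K M : ℕ} {p : (Fin d → ℕ) → Rd d → ℂ}
    (hrep : ∀ φ : 𝓢(Rd d, ℂ), HasCompactSupport φ →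
      f φ = ∑' x, ∑ k ∈ mIdx d K, p k x * dkDelta k x φ)
    (hgrowth : ∃ C r₀ : ℝ, ∀ r ≥ r₀,
      (∑' x, if ‖x‖ ≤ r then ∑ k ∈ mIdx d K, (‖p k x‖₊ : ℝ≥0∞) else 0) ≤
        ENNReal.ofReal (C * r ^ (d + M))) :
    HasScalingBound (fourierTD f) (d + M + 1) M K := by
  obtain ⟨C, r₀, hP⟩ := hgrowth
  set r₁ := max r₀ 1
  have hr₁ : 1 ≤ r₁ := le_max_right r₀ 1
  have hP' : ∀ r ≥ r₁,
      (∑' x, if ‖x‖ ≤ r then ∑ k ∈ mIdx d K, (‖p k x‖₊ : ℝ≥0∞) else 0) ≤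
        ENNReal.ofReal (max C 0 * r ^ (d + M)) := by
    intro r hr
    have hr0 : 0 ≤ r := zero_le_one.trans (hr₁.trans hr)
    refine (hP r ((le_max_left r₀ 1).trans hr)).trans (ENNReal.ofReal_le_ofReal ?_)
    gcongr
    exact le_max_left C 0
  obtain ⟨C', hC', hf⟩ := exists_norm_mul_pow_le_of_scaledBoundAt hrep (le_max_right C 0) hP'
  obtain ⟨D, hD, hfourier⟩ := exists_scaledBoundAt_fourier (Rd d) (d + M + 1) K
  refine ⟨C' * D, by positivity, r₁⁻¹, ⟨by positivity, inv_le_one_of_one_le₀ hr₁⟩, ?_⟩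
  intro ε A γ g ⟨hε, hεr⟩ hg hA
  have hεr' : ε * r₁ ≤ 1 := (le_inv_mul_iff₀' (by positivity)).1 (by simpa using hεr)
  have hbound := hf (ψ := fourierTransformCLM ℂ g) hε hεr'
    (hfourier hε.le (hεr.trans (inv_le_one_of_one_le₀ hr₁)) hg hA)
  rw [finrank_euclideanSpace_fin, pow_add] at hbound
  refine le_of_mul_le_mul_left ?_ (pow_pos hε d)
  calc ε ^ d * (‖f (fourierTransformCLM ℂ g)‖ * ε ^ M)
      = ‖f (fourierTransformCLM ℂ g)‖ * (ε ^ d * ε ^ M) := mul_left_comm _ _ _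
    _ ≤ C' * (D * A * (1 + ‖γ‖) ^ K * ε ^ d) := hbound
    _ = ε ^ d * (C' * D * A * (1 + ‖γ‖) ^ K) := by ring

lemma HasScalingBound.exists_norm_apply_localize_le {T : TemperedDist d} {N M K : ℕ}
    (h : HasScalingBound T N M K) :
    ∃ C ≥ 0, ∃ ε₀ > 0, ∀ {L : ℕ} {A ε : ℝ} {γ : Rd d} {φ : 𝓢(Rd d, ℂ)},
      (∀ y, ScaledBoundAt (max L N) 1 A φ y) → (∀ j < L, iteratedFDeriv ℝ j φ γ = 0) →
      ε ∈ Ioc 0 ε₀ → ‖T (localize γ ε φ)‖ * ε ^ M ≤ C * A * (1 + ‖γ‖) ^ K * ε ^ L := by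
  obtain ⟨C, hC, ε₀, hε₀, hT⟩ := h
  obtain ⟨B, hB0, hB⟩ := exists_scaledBoundAt_localize (Rd d) N
  refine ⟨C * B, by positivity, ε₀, hε₀.1, fun {L A ε γ φ} hA hjet hε => ?_⟩
  have hsupp := tsupport_localize_subset γ φ hε.1
  have hflat : ∀ y, ScaledBoundAt N ε (B * (A * ε ^ L)) (localize γ ε φ) y := by
    intro y
    by_cases hy : y ∈ closedBall γ ε
    · exact hB hε.1.le le_rfl hε.1 <| .of_jet_eq_zero (φ.smooth _) hA hjet
        (hε.2.trans hε₀.2) (mem_closedBall_iff_norm.1 hy)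
    · have hA0 := (hA y).nonneg
      have hε0 := hε.1.le
      exact .of_notMem_tsupport (by positivity) fun hmem => hy (hsupp hmem)
  exact (hT hε hsupp hflat).trans_eq (by ring)

end ScalingBound

section Support

open Filter
open scoped ContDiff Manifold Topology

lemma exists_eq_sum_of_tsupport_subset_iUnion {E : Type*} [NormedAddCommGroup E] [NormedSpace ℝ E]
    [FiniteDimensional ℝ E] {φ : 𝓢(E, ℂ)} (hφ : HasCompactSupport φ) {ι : Type*} [Fintype ι]
    {U : ι → Set E} (hU : ∀ i, IsOpen (U i)) (hcover : tsupport φ ⊆ ⋃ i, U i) :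
    ∃ ψ : ι → 𝓢(E, ℂ), (∀ i, HasCompactSupport (ψ i)) ∧ (∀ i, tsupport (ψ i) ⊆ U i) ∧
      ∑ i, ψ i = φ := by
  obtain ⟨ρ, hρ⟩ := SmoothPartitionOfUnity.exists_isSubordinate 𝓘(ℝ, E) (isClosed_tsupport φ)
    U hU hcover
  have hsmooth (i : ι) : ContDiff ℝ ∞ fun x => ρ i x • φ x :=
    (ρ i).contMDiff.contDiff.smul (φ.smooth ⊤)
  have hcompact (i : ι) : HasCompactSupport fun x => ρ i x • φ x := hφ.smul_left (f := ρ i)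
  refine ⟨fun i => (hcompact i).toSchwartzMap (hsmooth i), hcompact, fun i => ?_, ?_⟩
  · exact (tsupport_smul_subset_left (ρ i) φ).trans (hρ i)
  · ext x
    rw [sum_apply]
    change ∑ i, ρ i x • φ x = φ x
    by_cases hx : x ∈ tsupport φ
    · rw [← Finset.sum_smul, ← finsum_eq_sum_of_fintype, ρ.sum_eq_one hx, one_smul]
    · simp [image_eq_zero_of_notMem_tsupport hx]

variable {d : ℕ} {T : TemperedDist d} {φ ψ : 𝓢(Rd d, ℂ)}

lemma exists_isOpen_of_notMem_tdSupport {x : Rd d} (hx : x ∉ tdSupport T) :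
    ∃ U, IsOpen U ∧ x ∈ U ∧
      ∀ ψ : 𝓢(Rd d, ℂ), HasCompactSupport ψ → tsupport ψ ⊆ U → T ψ = 0 := by
  simpa only [tdSupport, mem_ofPred_eq, not_forall, not_exists, not_and, not_not,
    exists_prop] using hx

lemma apply_eq_zero_of_disjoint_tdSupport (hφ : HasCompactSupport φ)
    (hdisj : Disjoint (tdSupport T) (tsupport φ)) : T φ = 0 := by
  choose U hU hxU hTU using fun x : tsupport φ =>
    exists_isOpen_of_notMem_tdSupport (hdisj.notMem_of_mem_right x.2)
  obtain ⟨t, ht⟩ := hφ.isCompact.elim_finite_subcover U hU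
    fun x hx => mem_iUnion.2 ⟨⟨x, hx⟩, hxU _⟩
  obtain ⟨ψ, hψ, hψU, hsum⟩ := exists_eq_sum_of_tsupport_subset_iUnion hφ
    (U := fun x : t => U x) (fun x => hU x) (ht.trans_eq (iUnion_subtype (· ∈ t) fun x => U x).symm)
  rw [← hsum, map_sum]
  exact Finset.sum_eq_zero fun x _ => hTU x _ (hψ x) (hψU x)

lemma apply_congr_of_eventuallyEq (hφ : HasCompactSupport φ) (hψ : HasCompactSupport ψ)
    (h : ∀ x ∈ tdSupport T, φ =ᶠ[𝓝 x] ψ) : T φ = T ψ := by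
  rw [← sub_eq_zero, ← map_sub]
  refine apply_eq_zero_of_disjoint_tdSupport (hφ.sub hψ) (disjoint_left.2 fun x hx => ?_)
  rw [notMem_tsupport_iff_eventuallyEq]
  filter_upwards [h x hx] with y hy
  exact sub_eq_zero.2 hy

end Support

section Isolated

open Filter
open scoped Topology

variable {d : ℕ}

/-- The closed ball of positive radius `e` around `γ` contains no point of `S` other than possibly
`γ` itself. -/
def IsIsolatingRadius (S : Set (Rd d)) (γ : Rd d) (e : ℝ) : Prop :=
  0 < e ∧ ∀ γ' ∈ S, γ' ≠ γ → e < ‖γ' - γ‖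

lemma LocFinite.exists_isIsolatingRadius {S : Set (Rd d)} (hS : LocFinite S) (γ : Rd d) :
    ∃ e, IsIsolatingRadius S γ e := by
  have hfin : ((S ∩ ball γ 1) \ {γ}).Finite := (hS γ 1).subset sdiff_subset
  have hnhds : ((S ∩ ball γ 1) \ {γ})ᶜ ∩ ball γ 1 ∈ 𝓝 γ :=
    inter_mem (hfin.isClosed.isOpen_compl.mem_nhds (by simp)) (ball_mem_nhds γ one_pos)
  obtain ⟨e, he, hball⟩ := nhds_basis_closedBall.mem_iff.1 hnhds
  refine ⟨e, he, fun γ' hγ' hne => ?_⟩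
  by_contra! hle
  have hmem := hball (mem_closedBall_iff_norm.2 hle)
  exact hmem.1 ⟨⟨hγ', hmem.2⟩, hne⟩

lemma IsIsolatingRadius.mono {S : Set (Rd d)} {γ : Rd d} {e ε : ℝ} (he : IsIsolatingRadius S γ e)
    (hε : 0 < ε) (hεe : ε ≤ e) : IsIsolatingRadius S γ ε :=
  ⟨hε, fun γ' hγ' hne => hεe.trans_lt (he.2 γ' hγ' hne)⟩

variable {T : TemperedDist d}

lemma IsIsolatingRadius.apply_localize_eq {γ : Rd d} {e e' : ℝ}
    (he : IsIsolatingRadius (tdSupport T) γ e) (he' : IsIsolatingRadius (tdSupport T) γ e')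
    (φ : 𝓢(Rd d, ℂ)) : T (localize γ e φ) = T (localize γ e' φ) := by
  refine apply_congr_of_eventuallyEq (hasCompactSupport_localize γ φ he.1)
    (hasCompactSupport_localize γ φ he'.1) fun x hx => ?_
  by_cases hxγ : x = γ
  · subst hxγ
    have hnear {ε : ℝ} (hε : 0 < ε) : localize x ε φ =ᶠ[𝓝 x] φ :=
      localize_eventuallyEq_of_norm_lt x φ hε (by simpa using hε)
    exact (hnear he.1).trans (hnear he'.1).symm
  · exact (localize_eventuallyEq_zero γ φ he.1 (he.2 x hx hxγ)).trans
      (localize_eventuallyEq_zero γ φ he'.1 (he'.2 x hx hxγ)).symm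

lemma apply_eq_sum_localize {e : Rd d → ℝ}
    (he : ∀ γ, IsIsolatingRadius (tdSupport T) γ (e γ)) {φ : 𝓢(Rd d, ℂ)}
    (hφ : HasCompactSupport φ) {S : Finset (Rd d)}
    (hS : ∀ x ∈ tdSupport T, x ∈ tsupport φ → x ∈ S) :
    T φ = ∑ γ ∈ S, T (localize γ (e γ) φ) := by
  have hcompact : HasCompactSupport (∑ γ ∈ S, localize γ (e γ) φ : 𝓢(Rd d, ℂ)) :=
    Finset.sum_induction _ (fun ψ : 𝓢(Rd d, ℂ) => HasCompactSupport ψ) (fun _ _ => .add) .zero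
      fun γ _ => hasCompactSupport_localize γ φ (he γ).1
  rw [← map_sum]
  refine apply_congr_of_eventuallyEq hφ hcompact fun x hx => ?_
  have hfar : ∀ᶠ y in 𝓝 x, ∀ γ ∈ S, γ ≠ x → localize γ (e γ) φ y = 0 := by
    refine (Filter.eventually_all_finset S).2 fun γ _ => ?_
    by_cases hγx : γ = x
    · exact .of_forall fun y hne => absurd hγx hne
    · filter_upwards [localize_eventuallyEq_zero γ φ (he γ).1 ((he γ).2 x hx (Ne.symm hγx))]
        with y hy _ using hy
  by_cases hxS : x ∈ S
  · have hnear := localize_eventuallyEq_of_norm_lt x φ (he x).1 (x := x) (by simpa using (he x).1)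
    filter_upwards [hfar, hnear] with y hy hyx
    rw [sum_apply, Finset.sum_eq_single_of_mem x hxS (hy ·), hyx]
  · have hxφ : x ∉ tsupport φ := fun hmem => hxS (hS x hx hmem)
    filter_upwards [hfar, notMem_tsupport_iff_eventuallyEq.1 hxφ] with y hy hyφ
    rw [sum_apply, hyφ]
    exact (Finset.sum_eq_zero fun γ hγ => hy γ hγ fun h => hxS (h ▸ hγ)).symm

end Isolated

section JetExpansion

open Filter
open scoped Topology

variable {d : ℕ} {T : TemperedDist d} {N M K : ℕ}

lemma mem_mIdx {m : Fin d → ℕ} : m ∈ mIdx d M ↔ ∑ i, m i ≤ M := by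
  rw [mIdx, Finset.mem_filter, Finset.mem_Iic, and_iff_right_iff_imp]
  exact fun h i => (Finset.single_le_sum (fun _ _ => Nat.zero_le _) (Finset.mem_univ i)).trans h

namespace HasScalingBound

lemma apply_localize_eq_zero (h : HasScalingBound T N M K) {γ : Rd d} {e : ℝ}
    (he : IsIsolatingRadius (tdSupport T) γ e) {ψ : 𝓢(Rd d, ℂ)}
    (hjet : ∀ j < M + 1, iteratedFDeriv ℝ j ψ γ = 0) : T (localize γ e ψ) = 0 := by
  obtain ⟨C, -, ε₀, hε₀, hT⟩ := h.exists_norm_apply_localize_le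
  obtain ⟨A, hA⟩ := exists_forall_scaledBoundAt ψ (max (M + 1) N)
  have hsmall : ∀ᶠ ε in 𝓝[>] (0 : ℝ),
      ‖T (localize γ e ψ)‖ ≤ C * A * (1 + ‖γ‖) ^ K * ε := by
    filter_upwards [Ioc_mem_nhdsGT he.1, Ioc_mem_nhdsGT hε₀] with ε hεe hε
    rw [he.apply_localize_eq (he.mono hεe.1 hεe.2)]
    refine le_of_mul_le_mul_right ((hT hA hjet hε).trans_eq (by ring)) (pow_pos hε.1 M)
  have hlim : Tendsto (fun ε => C * A * (1 + ‖γ‖) ^ K * ε) (𝓝[>] 0) (𝓝 0) :=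
    ((continuous_const_mul _).tendsto' 0 0 (mul_zero _)).mono_left nhdsWithin_le_nhds
  exact norm_le_zero_iff.1 (ge_of_tendsto hlim hsmall)

lemma apply_localize_eq_sum (h : HasScalingBound T N M K) {γ : Rd d} {e : ℝ}
    (he : IsIsolatingRadius (tdSupport T) γ e) (φ : 𝓢(Rd d, ℂ)) :
    T (localize γ e φ) = ∑ m ∈ mIdx d M, Dmulti m φ γ * T (localize γ e (jetBump m γ)) := by
  set P : 𝓢(Rd d, ℂ) := ∑ m ∈ mIdx d M, Dmulti m φ γ • jetBump m γ with hP
  have hjet : ∀ j < M + 1, iteratedFDeriv ℝ j (φ - P) γ = 0 := by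
    intro j hj
    refine iteratedFDeriv_eq_zero_of_Dmulti_eq_zero ((φ - P).smooth ⊤) fun k hk => ?_
    have hdual (m : Fin d → ℕ) : DmultiAt k γ (jetBump m γ) = if k = m then 1 else 0 :=
      Dmulti_jetBump k m γ
    have hkP : DmultiAt k γ P = Dmulti k φ γ := by
      simp only [hP, map_sum, map_smul, hdual, smul_eq_mul, mul_ite, mul_one, mul_zero,
        Finset.sum_ite_eq, mem_mIdx.2 (hk.trans_le (Nat.lt_succ_iff.1 hj)), if_true]
    exact (map_sub (DmultiAt k γ) φ P).trans (sub_eq_zero.2 hkP.symm)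
  have hzero := h.apply_localize_eq_zero he hjet
  rw [map_sub, map_sub, sub_eq_zero] at hzero
  simp only [hzero, hP, map_sum, map_smul, smul_eq_mul]

lemma exists_norm_apply_localize_jetBump_le (h : HasScalingBound T N M K) {m : Fin d → ℕ}
    (hm : ∑ i, m i = M) :
    ∃ C, ∀ {γ : Rd d} {e : ℝ}, IsIsolatingRadius (tdSupport T) γ e →
      ‖T (localize γ e (jetBump m γ))‖ ≤ C * (1 + ‖γ‖) ^ K := by
  obtain ⟨C, -, ε₀, hε₀, hT⟩ := h.exists_norm_apply_localize_le
  obtain ⟨A, hA⟩ := exists_forall_scaledBoundAt_jetBump m (max M N)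
  refine ⟨C * A, fun {γ e} he => ?_⟩
  have hε : 0 < min e ε₀ := lt_min he.1 hε₀
  have hjet : ∀ j < M, iteratedFDeriv ℝ j (jetBump m γ) γ = 0 := by
    intro j hj
    refine iteratedFDeriv_eq_zero_of_Dmulti_eq_zero ((jetBump m γ).smooth ⊤) fun k hk => ?_
    rw [Dmulti_jetBump, if_neg]
    rintro rfl
    omega
  rw [he.apply_localize_eq (he.mono hε (min_le_left e ε₀))]
  exact le_of_mul_le_mul_right (hT (hA γ) hjet ⟨hε, min_le_right e ε₀⟩) (pow_pos hε M)

end HasScalingBound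

/-- The coefficient of `D^m δ_x` in the expansion of `T` at the points of its support: `T` is tested
on a monomial of multi-degree `m` at `x`, cut off at the radius `e x`; the sign is that of
`dkDelta`. -/
def jetCoeff (T : TemperedDist d) (e : Rd d → ℝ) (m : Fin d → ℕ) : Rd d → ℂ :=
  (tdSupport T).indicator fun x => (-1) ^ (∑ i, m i) * T (localize x (e x) (jetBump m x))

variable {e : Rd d → ℝ}

namespace HasScalingBound

lemma apply_localize_eq_sum_jetCoeff (h : HasScalingBound T N M K)
    (he : ∀ γ, IsIsolatingRadius (tdSupport T) γ (e γ)) {x : Rd d} (hx : x ∈ tdSupport T)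
    (φ : 𝓢(Rd d, ℂ)) :
    T (localize x (e x) φ) = ∑ m ∈ mIdx d M, jetCoeff T e m x * dkDelta m x φ := by
  rw [h.apply_localize_eq_sum (he x) φ]
  refine Finset.sum_congr rfl fun m _ => ?_
  have hsign : ((-1 : ℂ) ^ (∑ i, m i)) * (-1) ^ (∑ i, m i) = 1 := by
    rw [← mul_pow, neg_one_mul, neg_neg, one_pow]
  rw [jetCoeff, indicator_of_mem hx, dkDelta]
  linear_combination -(Dmulti m φ x * T (localize x (e x) (jetBump m x))) * hsign

lemma apply_eq_tsum_jetCoeff (h : HasScalingBound T N M K) (hT : LocFinite (tdSupport T))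
    (he : ∀ γ, IsIsolatingRadius (tdSupport T) γ (e γ)) {φ : 𝓢(Rd d, ℂ)}
    (hφ : HasCompactSupport φ) :
    T φ = ∑' x, ∑ m ∈ mIdx d M, jetCoeff T e m x * dkDelta m x φ := by
  obtain ⟨R, hR⟩ := hφ.isCompact.isBounded.subset_ball (0 : Rd d)
  set S : Finset (Rd d) := (hT 0 R).toFinset
  have hmemS {x : Rd d} : x ∈ S ↔ x ∈ tdSupport T ∩ ball 0 R := (hT 0 R).mem_toFinset
  have hoff : ∀ x ∉ S, ∑ m ∈ mIdx d M, jetCoeff T e m x * dkDelta m x φ = 0 := by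
    refine fun x hxS => Finset.sum_eq_zero fun m _ => ?_
    by_cases hx : x ∈ tdSupport T
    · have hxφ : x ∉ tsupport φ := fun hmem => hxS (hmemS.2 ⟨hx, hR hmem⟩)
      rw [dkDelta, Dmulti_eq_zero_of_notMem_tsupport m (φ.smooth ⊤) hxφ, mul_zero, mul_zero]
    · rw [jetCoeff, indicator_of_notMem hx, zero_mul]
  rw [apply_eq_sum_localize he hφ fun x hx hmem => hmemS.2 ⟨hx, hR hmem⟩, tsum_eq_sum hoff]
  exact Finset.sum_congr rfl fun x hx => h.apply_localize_eq_sum_jetCoeff he (hmemS.1 hx).1 φ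

lemma exists_norm_jetCoeff_le (h : HasScalingBound T N M K)
    (he : ∀ γ, IsIsolatingRadius (tdSupport T) γ (e γ)) {m : Fin d → ℕ} (hm : ∑ i, m i = M) :
    ∃ C R : ℝ, ∀ x, R ≤ ‖x‖ → ‖jetCoeff T e m x‖ ≤ C * ‖x‖ ^ K := by
  obtain ⟨C, hC⟩ := h.exists_norm_apply_localize_jetBump_le hm
  have hC0 : 0 ≤ C := by simpa using (norm_nonneg _).trans (hC (he 0))
  refine ⟨C * 2 ^ K, 1, fun x hx => ?_⟩
  calc ‖jetCoeff T e m x‖ ≤ ‖(-1) ^ (∑ i, m i) * T (localize x (e x) (jetBump m x))‖ :=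
        norm_indicator_le_norm_self _ x
    _ = ‖T (localize x (e x) (jetBump m x))‖ := by simp
    _ ≤ C * (1 + ‖x‖) ^ K := hC (he x)
    _ ≤ C * (2 * ‖x‖) ^ K := by gcongr; linarith
    _ = C * 2 ^ K * ‖x‖ ^ K := by rw [mul_pow, mul_assoc]

theorem exists_eq_tsum_dkDelta (h : HasScalingBound T N M K) (hT : LocFinite (tdSupport T)) :
    ∃ q : (Fin d → ℕ) → Rd d → ℂ, (∀ m x, q m x ≠ 0 → x ∈ tdSupport T) ∧
      (∀ φ : 𝓢(Rd d, ℂ), HasCompactSupport φ →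
        T φ = ∑' x, ∑ m ∈ mIdx d M, q m x * dkDelta m x φ) ∧
      (∀ m ∈ mIdx d M, (∑ i, m i) = M →
        ∃ C' R : ℝ, ∀ x, R ≤ ‖x‖ → ‖q m x‖ ≤ C' * ‖x‖ ^ K) := by
  choose e he using hT.exists_isIsolatingRadius
  exact ⟨jetCoeff T e, fun m x => mem_of_indicator_ne_zero,
    fun φ hφ => h.apply_eq_tsum_jetCoeff hT he hφ, fun m _ => h.exists_norm_jetCoeff_le he⟩

end HasScalingBound

end JetExpansion

theorem statement10_general {d : ℕ} (f : TemperedDist d) (K M : ℕ)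
    (p : (Fin d → ℕ) → Rd d → ℂ)
    (hΓ : LocFinite (tdSupport (fourierTD f)))
    (hrep : ∀ φ : SchwartzMap (Rd d) ℂ, HasCompactSupport (⇑φ) →
      f φ = ∑' x : Rd d, ∑ k ∈ mIdx d K, p k x * dkDelta k x φ)
    (hgrowth : ∃ C r₀ : ℝ, ∀ r ≥ r₀,
      (∑' x : Rd d, if ‖x‖ ≤ r then ∑ k ∈ mIdx d K, (‖p k x‖₊ : ℝ≥0∞) else 0)
        ≤ ENNReal.ofReal (C * r ^ (d + M))) :
    ∃ q : (Fin d → ℕ) → Rd d → ℂ,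
      (∀ m x, q m x ≠ 0 → x ∈ tdSupport (fourierTD f)) ∧
      (∀ φ : SchwartzMap (Rd d) ℂ, HasCompactSupport (⇑φ) →
        fourierTD f φ = ∑' x : Rd d, ∑ m ∈ mIdx d M, q m x * dkDelta m x φ) ∧
      (∀ m ∈ mIdx d M, (∑ i, m i) = M →
        ∃ C' R : ℝ, ∀ x : Rd d, R ≤ ‖x‖ → ‖q m x‖ ≤ C' * ‖x‖ ^ K) :=
  (hasScalingBound_fourierTD hrep hgrowth).exists_eq_tsum_dkDelta hΓ

/-- (Proposition 3.) Let
`f = Σ_{λ∈Λ} Σ_{‖k‖≤K} p_k(λ) D^k δ_λ` be a tempered distribution on `ℝ^d`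
with locally finite support and locally finite spectrum `Γ`, such that
`Σ_{|λ|≤r} Σ_{‖k‖≤K} |p_k(λ)| = O(r^{d+M})`. Then
`f̂ = Σ_{γ∈Γ} Σ_{‖m‖≤M} q_m(γ) D^m δ_γ` and `q_m(γ) = O(|γ|^K)` for `‖m‖ = M`. -/
theorem statement10 {d : ℕ} (f : TemperedDist d) (Λ : Set (Rd d)) (K M : ℕ)
    (p : (Fin d → ℕ) → Rd d → ℂ)
    (hsupp : ∀ k x, p k x ≠ 0 → x ∈ Λ)
    (hΛ : LocFinite Λ)
    (hΓ : LocFinite (tdSupport (fourierTD f)))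
    (hrep : ∀ φ : SchwartzMap (Rd d) ℂ, HasCompactSupport (⇑φ) →
      f φ = ∑' x : Rd d, ∑ k ∈ mIdx d K, p k x * dkDelta k x φ)
    (hgrowth : ∃ C r₀ : ℝ, ∀ r ≥ r₀,
      (∑' x : Rd d, if ‖x‖ ≤ r then ∑ k ∈ mIdx d K, (‖p k x‖₊ : ℝ≥0∞) else 0)
        ≤ ENNReal.ofReal (C * r ^ (d + M))) :
    ∃ q : (Fin d → ℕ) → Rd d → ℂ,
      (∀ m x, q m x ≠ 0 → x ∈ tdSupport (fourierTD f)) ∧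
      (∀ φ : SchwartzMap (Rd d) ℂ, HasCompactSupport (⇑φ) →
        fourierTD f φ = ∑' x : Rd d, ∑ m ∈ mIdx d M, q m x * dkDelta m x φ) ∧
      (∀ m ∈ mIdx d M, (∑ i, m i) = M →
        ∃ C' R : ℝ, ∀ x : Rd d, R ≤ ‖x‖ → ‖q m x‖ ≤ C' * ‖x‖ ^ K) :=
  statement10_general f K M p hΓ hrep hgrowth
end
end
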